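/- arXiv:1401.6905 — 11 statements merged into one kernel-verified Lean document; each statement's English description precedes it below -/
import Mathlib

section
/- Suppose d < 0 and γ ∈ ℝ are such that E[∫₀^{τ∧T} (f(X_s) − d) ds] ≤ γ for every stopping time τ and every T ≥ 0. If σ is an integrable stopping time (E[σ] < ∞) such that E[∫₀^σ f(X_s) ds + g(X_σ)] ≥ −‖g‖ − ε for some ε ≥ 0 (in particular, if σ is ε-optimal for the stopping problem sup_τ limsup_T E[∫₀^{τ∧T} f(X_s) ds + g(X_{τ∧T})], whose value is at least −‖g‖), then E[σ] ≤ (γ + 2‖g‖ + ε)/(−d). -/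
open MeasureTheory Filter Set
open scoped ENNReal Topology


theorem aux_joint {Ω : Type*} {m0 : MeasurableSpace Ω} (𝓕 : Filtration ℝ m0)
    {E : Type*} [MetricSpace E] [MeasurableSpace E] [BorelSpace E]
    (X : ℝ → Ω → E) (hX : IsStronglyProgressive 𝓕 X) :
    Measurable (fun p : ℝ × Ω => X p.1 p.2) := by
  refine measurable_of_tendsto_metrizable
    (f := fun (n : ℕ) (p : ℝ × Ω) => X (min p.1 n) p.2) ?_ ?_
  · intro n
    have h1 : Measurable (fun p : Set.Iic (n : ℝ) × Ω => X p.1 p.2) := by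
      refine (hX (n : ℝ)).measurable.mono ?_ le_rfl
      exact sup_le_sup le_rfl (MeasurableSpace.comap_mono (𝓕.le _))
    have h2 : Measurable (fun p : ℝ × Ω =>
        ((⟨min p.1 n, Set.mem_Iic.2 (min_le_right _ _)⟩ : Set.Iic (n : ℝ)), p.2)) := by
      refine Measurable.prodMk (Measurable.subtype_mk ?_) measurable_snd
      exact measurable_fst.min measurable_const
    exact h1.comp h2
  · rw [tendsto_pi_nhds]
    rintro ⟨t, ω⟩
    obtain ⟨N, hN⟩ := exists_nat_ge t
    refine tendsto_const_nhds.congr' ?_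
    filter_upwards [eventually_ge_atTop N] with n hn
    have : t ≤ n := hN.trans (by exact_mod_cast hn)
    simp [min_eq_left this]

theorem aux_meas {Ω : Type*} {m0 : MeasurableSpace Ω} (u : ℝ → Ω → ℝ)
    (hu : Measurable (fun p : ℝ × Ω => u p.1 p.2)) (τ : Ω → ℝ) (hτ : Measurable τ)
    (h0 : ∀ ω, 0 ≤ τ ω) :
    StronglyMeasurable (fun ω => ∫ s in (0:ℝ)..(τ ω), u s ω) := by
  have h : (fun ω => ∫ s in (0:ℝ)..(τ ω), u s ω) =
      fun ω => ∫ s, (if 0 < s ∧ s ≤ τ ω then u s ω else 0) := by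
    funext ω
    rw [intervalIntegral.integral_of_le (h0 ω), ← integral_indicator measurableSet_Ioc]
    simp only [Set.indicator_apply, Set.mem_Ioc]
  rw [h]
  refine StronglyMeasurable.integral_prod_right
    (f := fun ω s => (if 0 < s ∧ s ≤ τ ω then u s ω else 0)) ?_
  refine Measurable.stronglyMeasurable ?_
  refine Measurable.ite ?_ (hu.comp measurable_swap) measurable_const
  exact (measurableSet_lt measurable_const measurable_snd).inter
    (measurableSet_le measurable_snd (hτ.comp measurable_fst))

/-- From the uniform bound `E[∫₀^{τ∧T}(f(X_s) − d) ds] ≤ γ` (with `d < 0`)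
applied to an integrable nearly-optimal stopping time `σ`, one gets
`E[σ] ≤ (γ + 2‖g‖ + ε)/(−d)`. -/
theorem stmt1
    {Ω : Type*} {m0 : MeasurableSpace Ω} (P : Measure Ω) [IsProbabilityMeasure P]
    (𝓕 : Filtration ℝ m0)
    {E : Type*} [MetricSpace E] [MeasurableSpace E] [BorelSpace E]
    (X : ℝ → Ω → E) (hX : ProgMeasurable 𝓕 X)
    (f g : E → ℝ) (hf : Measurable f) (hg : Measurable g)
    (Cf Cg : ℝ) (hfb : ∀ x, |f x| ≤ Cf) (hgb : ∀ x, |g x| ≤ Cg)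
    (d γ : ℝ) (hd : d < 0)
    (hγ : ∀ τ : Ω → ℝ, IsStoppingTime 𝓕 (fun ω => (τ ω : WithTop ℝ)) → (∀ ω, 0 ≤ τ ω) → ∀ T : ℝ, 0 ≤ T →
      ∫ ω, (∫ s in (0:ℝ)..(min (τ ω) T), (f (X s ω) - d)) ∂P ≤ γ)
    (σ : Ω → ℝ) (hσ : IsStoppingTime 𝓕 (fun ω => (σ ω : WithTop ℝ))) (hσ0 : ∀ ω, 0 ≤ σ ω)
    (hσint : Integrable σ P)
    (ε : ℝ) (hε : 0 ≤ ε)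
    (hval : -Cg - ε ≤ ∫ ω, ((∫ s in (0:ℝ)..(σ ω), f (X s ω)) + g (X (σ ω) ω)) ∂P) :
    ∫ ω, σ ω ∂P ≤ (γ + 2 * Cg + ε) / (-d) := by
  have hJ := aux_joint 𝓕 X hX
  have hσm : Measurable σ := by
    refine measurable_of_Iic fun t => ?_
    have := 𝓕.le t _ (hσ t)
    simpa [Set.preimage, Iic] using this
  have hfJ : Measurable (fun p : ℝ × Ω => f (X p.1 p.2)) := hf.comp hJ
  have hb : ∀ (ω : Ω) (t : ℝ), 0 ≤ t → |∫ s in (0:ℝ)..t, f (X s ω)| ≤ Cf * t := by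
    intro ω t ht
    have := intervalIntegral.norm_integral_le_of_norm_le_const (a := 0) (b := t) (C := Cf)
      (f := fun s => f (X s ω)) (fun s _ => hfb _)
    simpa [abs_of_nonneg ht] using this
  have hii : ∀ (ω : Ω) (t : ℝ), IntervalIntegrable (fun s => f (X s ω)) volume 0 t := by
    intro ω t
    have hm : Measurable (fun s => f (X s ω)) := hfJ.comp (measurable_id.prodMk measurable_const)
    refine (intervalIntegrable_const (c := Cf)).mono_fun hm.aestronglyMeasurable ?_
    refine Eventually.of_forall fun s => ?_
    exact (hfb _).trans (le_abs_self _)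
  have hsplit : ∀ (ω : Ω) (t : ℝ), ∫ s in (0:ℝ)..t, (f (X s ω) - d)
      = (∫ s in (0:ℝ)..t, f (X s ω)) - d * t := by
    intro ω t
    rw [intervalIntegral.integral_sub (hii ω t) intervalIntegrable_const]
    simp [mul_comm]
  have hF : Integrable (fun ω => ∫ s in (0:ℝ)..(σ ω), f (X s ω)) P := by
    refine (hσint.const_mul Cf).mono'
      (aux_meas (fun s ω => f (X s ω)) hfJ σ hσm hσ0).aestronglyMeasurable ?_
    exact Eventually.of_forall fun ω => hb ω _ (hσ0 ω)
  have hgm : Measurable (fun ω => g (X (σ ω) ω)) :=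
    hg.comp (hJ.comp (hσm.prodMk measurable_id))
  have hG : Integrable (fun ω => g (X (σ ω) ω)) P :=
    (integrable_const Cg).mono' hgm.aestronglyMeasurable (Eventually.of_forall fun ω => hgb _)
  have hGle : ∫ ω, g (X (σ ω) ω) ∂P ≤ Cg := by
    have := integral_mono hG (integrable_const Cg) (fun ω => (le_abs_self _).trans (hgb _))
    simpa using this
  have hlim : Tendsto (fun n : ℕ => ∫ ω, (∫ s in (0:ℝ)..(min (σ ω) n), (f (X s ω) - d)) ∂P)
      atTop (𝓝 (∫ ω, (∫ s in (0:ℝ)..(σ ω), (f (X s ω) - d)) ∂P)) := by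
    refine tendsto_integral_of_dominated_convergence (fun ω => (Cf + |d|) * σ ω) ?_
      (hσint.const_mul _) ?_ ?_
    · intro n
      exact (aux_meas (fun s ω => f (X s ω) - d) (hfJ.sub_const d) (fun ω => min (σ ω) n)
        (hσm.min measurable_const)
        (fun ω => le_min (hσ0 ω) n.cast_nonneg)).aestronglyMeasurable
    · intro n
      refine Eventually.of_forall fun ω => ?_
      have h0 : 0 ≤ min (σ ω) (n:ℝ) := le_min (hσ0 ω) n.cast_nonneg
      have h1 := intervalIntegral.norm_integral_le_of_norm_le_const (a := 0)
        (b := min (σ ω) (n:ℝ)) (C := Cf + |d|)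
        (f := fun s => f (X s ω) - d)
        (fun s _ => (abs_sub _ _).trans (add_le_add_left (hfb _) _))
      rw [sub_zero, abs_of_nonneg h0] at h1
      have hC : 0 ≤ Cf + |d| :=
        add_nonneg ((abs_nonneg _).trans (hfb (X 0 ω))) (abs_nonneg _)
      exact h1.trans (mul_le_mul_of_nonneg_left (min_le_left _ _) hC)
    · refine Eventually.of_forall fun ω => ?_
      obtain ⟨N, hN⟩ := exists_nat_ge (σ ω)
      refine tendsto_const_nhds.congr' ?_
      filter_upwards [eventually_ge_atTop N] with n hn
      have : σ ω ≤ n := hN.trans (by exact_mod_cast hn)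
      simp [min_eq_left this]
  have hle := le_of_tendsto' hlim (fun n => hγ σ hσ hσ0 n n.cast_nonneg)
  simp_rw [hsplit] at hle
  rw [integral_sub hF (hσint.const_mul d), integral_const_mul] at hle
  rw [integral_add hF hG] at hval
  rw [le_div_iff₀ (by linarith)]
  linarith
end

section
/- Let w, g : E → ℝ be measurable with g ≤ w pointwise, set Z_t := ∫₀^t f(X_s) ds + w(X_t), and assume each Z_t is integrable, (Z_t) is adapted, satisfies the optional-sampling supermartingale property, and Z_0 = w₀ a.s. for a constant w₀ ∈ ℝ. Let ε > 0 and η > 0, let σ be a bounded stopping time with E[∫₀^σ f(X_s) ds + g(X_σ)] ≥ w₀ − η, and let τ_ε be a stopping time such that for a.e. ω and every t < τ_ε(ω) one has g(X_t(ω)) < w(X_t(ω)) − ε. Then P(σ < τ_ε) ≤ η/ε. -/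
open MeasureTheory Filter Set
open scoped ENNReal Topology Classical

lemma aux_int_meas {Ω : Type*} {m0 : MeasurableSpace Ω}
    (𝓕 : Filtration ℝ m0)
    {E : Type*} [MetricSpace E] [MeasurableSpace E] [BorelSpace E]
    (X : ℝ → Ω → E) (hX : IsStronglyProgressive 𝓕 X)
    (f : E → ℝ) (hf : Measurable f) (σ : Ω → ℝ) (hσ : Measurable σ) (T : ℝ)
    (h0 : ∀ ω, 0 ≤ σ ω) (hT : ∀ ω, σ ω ≤ T) :
    Measurable (fun ω => ∫ s in (0:ℝ)..(σ ω), f (X s ω)) := by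
  have hj : Measurable (fun p : Ω × ℝ => f (X (min p.2 T) p.1)) := by
    have h1 := (hX T).measurable
    have h2 : @Measurable (Ω × ℝ) (Set.Iic T × Ω) (m0.prod inferInstance)
        (Subtype.instMeasurableSpace.prod (𝓕 T))
        (fun p => (⟨min p.2 T, Set.mem_Iic.2 (min_le_right _ _)⟩, p.1)) := by
      refine @Measurable.prodMk _ _ _ _ _ (𝓕 T) _ _ ?_ ?_
      · exact (measurable_snd.min measurable_const).subtype_mk
      · exact measurable_fst.mono le_rfl (𝓕.le T)
    exact hf.comp (h1.comp h2)
  have hS : MeasurableSet {p : Ω × ℝ | 0 < p.2 ∧ p.2 ≤ σ p.1} :=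
    (measurableSet_lt measurable_const measurable_snd).inter
      (measurableSet_le measurable_snd (hσ.comp measurable_fst))
  have h3 := ((hj.indicator hS).stronglyMeasurable.integral_prod_right'
    (ν := (volume : Measure ℝ))).measurable
  convert h3 using 2 with ω
  rw [intervalIntegral.integral_of_le (h0 ω), ← integral_indicator measurableSet_Ioc]
  congr 1
  ext s
  by_cases hs : 0 < s ∧ s ≤ σ ω
  · rw [indicator_of_mem (show s ∈ Ioc 0 (σ ω) from hs), indicator_of_mem (by exact hs)]
    simp [min_eq_left (hs.2.trans (hT ω))]
  · rw [indicator_of_notMem (show s ∉ Ioc 0 (σ ω) from hs), indicator_of_notMem (by exact hs)]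

lemma aux_int_bound {E Ω : Type*} (X : ℝ → Ω → E) (f : E → ℝ) (Cf : ℝ)
    (hfb : ∀ x, |f x| ≤ Cf) (t T : ℝ) (h0 : 0 ≤ t) (hT : t ≤ T) (ω : Ω) :
    |∫ s in (0:ℝ)..t, f (X s ω)| ≤ Cf * T := by
  have h := intervalIntegral.norm_integral_le_of_norm_le_const (a := 0) (b := t) (C := Cf)
    (f := fun s => f (X s ω)) (fun s _ => hfb _)
  rw [sub_zero, abs_of_nonneg h0, Real.norm_eq_abs] at h
  have : 0 ≤ Cf := (abs_nonneg _).trans (hfb (X 0 ω))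
  exact h.trans (mul_le_mul_of_nonneg_left hT this)

/-- If `Z_t = ∫₀^t f(X_s) ds + w(X_t)` is an integrable adapted
optional-sampling supermartingale with `Z_0 = w₀` a.s., `σ` is a bounded stopping time
which is `η`-optimal (its payoff is `≥ w₀ − η`), and `τ_ε` is a stopping time before which
`g(X_t) < w(X_t) − ε`, then `P(σ < τ_ε) ≤ η/ε`. -/
theorem stmt3
    {Ω : Type*} {m0 : MeasurableSpace Ω} (P : Measure Ω) [IsProbabilityMeasure P]
    (𝓕 : Filtration ℝ m0)
    {E : Type*} [MetricSpace E] [MeasurableSpace E] [BorelSpace E]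
    (X : ℝ → Ω → E) (hX : ProgMeasurable 𝓕 X)
    (f g : E → ℝ) (hf : Measurable f) (hg : Measurable g)
    (Cf Cg : ℝ) (hfb : ∀ x, |f x| ≤ Cf) (hgb : ∀ x, |g x| ≤ Cg)
    (w : E → ℝ) (hw : Measurable w) (hgw : ∀ x, g x ≤ w x)
    (hZint : ∀ t : ℝ, 0 ≤ t →
      Integrable (fun ω => (∫ s in (0:ℝ)..t, f (X s ω)) + w (X t ω)) P)
    (hZadp : ∀ t : ℝ, 0 ≤ t →
      StronglyMeasurable[𝓕 t] fun ω => (∫ s in (0:ℝ)..t, f (X s ω)) + w (X t ω))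
    (hZsup : ∀ (σ₁ σ₂ : Ω → ℝ) (h1 : IsStoppingTime 𝓕 (fun ω => (σ₁ ω : WithTop ℝ)))
        (_h2 : IsStoppingTime 𝓕 (fun ω => (σ₂ ω : WithTop ℝ))),
      (∀ ω, 0 ≤ σ₁ ω) → (∀ ω, σ₁ ω ≤ σ₂ ω) → (∃ T, ∀ ω, σ₂ ω ≤ T) →
      ∀ᵐ ω ∂P,
        (P[(fun ω' => (∫ s in (0:ℝ)..(σ₂ ω'), f (X s ω')) + w (X (σ₂ ω') ω')) |
            h1.measurableSpace]) ω
          ≤ (∫ s in (0:ℝ)..(σ₁ ω), f (X s ω)) + w (X (σ₁ ω) ω))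
    (w₀ : ℝ)
    (hZ0 : ∀ᵐ ω ∂P, (∫ s in (0:ℝ)..(0:ℝ), f (X s ω)) + w (X 0 ω) = w₀)
    (ε η : ℝ) (hε : 0 < ε) (hη : 0 < η)
    (σ : Ω → ℝ) (hσ : IsStoppingTime 𝓕 (fun ω => (σ ω : WithTop ℝ))) (hσ0 : ∀ ω, 0 ≤ σ ω)
    (hσb : ∃ T, ∀ ω, σ ω ≤ T)
    (hσval : w₀ - η ≤ ∫ ω, ((∫ s in (0:ℝ)..(σ ω), f (X s ω)) + g (X (σ ω) ω)) ∂P)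
    (τε : Ω → ℝ≥0∞)
    (hτεst : ∀ t : ℝ, MeasurableSet[𝓕 t] {ω | τε ω ≤ ENNReal.ofReal t})
    (hτε : ∀ᵐ ω ∂P, ∀ t : ℝ, 0 ≤ t → ENNReal.ofReal t < τε ω →
      g (X t ω) < w (X t ω) - ε) :
    (P {ω | ENNReal.ofReal (σ ω) < τε ω}).toReal ≤ η / ε := by
  have hX' : IsStronglyProgressive 𝓕 X := hX
  obtain ⟨T0, hT0⟩ := hσb
  obtain ⟨T, hT, hTn⟩ : ∃ T, (∀ ω, σ ω ≤ T) ∧ 0 ≤ T :=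
    ⟨max T0 0, fun ω => (hT0 ω).trans (le_max_left _ _), le_max_right _ _⟩
  have hσF : ∀ {φ : E → ℝ}, Measurable φ →
      Measurable[hσ.measurableSpace] (fun ω => φ (X (σ ω) ω)) := by
    intro φ hφ
    exact hφ.comp (measurable_stoppedValue hX' hσ)
  have hσm : Measurable σ := by
    refine measurable_of_Iic fun i => ?_
    have := 𝓕.le i _ (hσ i)
    simpa [Set.preimage, WithTop.coe_le_coe] using this
  have hτm : Measurable τε := by
    refine measurable_of_Iic fun a => ?_
    by_cases ha : a = ⊤
    · simp [ha]
    · have := 𝓕.le _ _ (hτεst a.toReal)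
      rw [ENNReal.ofReal_toReal ha] at this
      exact this
  set A : Set Ω := {ω | ENNReal.ofReal (σ ω) < τε ω} with hA
  have hAm : MeasurableSet A := measurableSet_lt hσm.ennreal_ofReal hτm
  set G : Ω → ℝ := fun ω => (∫ s in (0:ℝ)..(σ ω), f (X s ω)) + g (X (σ ω) ω) with hG
  have hGm : Measurable G := (aux_int_meas 𝓕 X hX' f hf σ hσm T hσ0 hT).add
    ((hσF hg).mono hσ.measurableSpace_le le_rfl)
  have hGi : Integrable G P := by
    refine Integrable.of_bound hGm.aestronglyMeasurable (Cf * T + Cg) (ae_of_all _ fun ω => ?_)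
    refine (abs_add_le _ _).trans (add_le_add ?_ (hgb _))
    exact aux_int_bound X f Cf hfb _ T (hσ0 ω) (hT ω) ω
  have hAi : Integrable (A.indicator fun _ => ε) P := (integrable_const ε).indicator hAm
  set H : Ω → ℝ := fun ω => G ω + A.indicator (fun _ => ε) ω with hH
  have hHi : Integrable H P := hGi.add hAi
  set ZT : Ω → ℝ := fun ω => (∫ s in (0:ℝ)..T, f (X s ω)) + w (X T ω) with hZT
  have hZTi : Integrable ZT P := hZint T hTn
  have hHZ : ∀ᵐ ω ∂P, H ω ≤ (∫ s in (0:ℝ)..(σ ω), f (X s ω)) + w (X (σ ω) ω) := by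
    filter_upwards [hτε] with ω h
    by_cases hω : ω ∈ A
    · have := h (σ ω) (hσ0 ω) hω
      simp only [hH, hG, indicator_of_mem hω]
      linarith
    · have := hgw (X (σ ω) ω)
      simp only [hH, hG, indicator_of_notMem hω]
      linarith
  let B : ℕ → Set Ω := fun n => {ω | w (X (σ ω) ω) ≤ n}
  have hBF : ∀ n, MeasurableSet[hσ.measurableSpace] (B n) := fun n =>
    (hσF hw) measurableSet_Iic
  have hBm : ∀ n, MeasurableSet (B n) := fun n => hσ.measurableSpace_le _ (hBF n)
  let D : ℕ → Ω → ℝ := fun n => (B n).piecewise H ZT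
  have hDi : ∀ n, Integrable (D n) P := fun n =>
    Integrable.piecewise (hBm n) hHi.integrableOn hZTi.integrableOn
  have key : ∀ n, ∫ ω, D n ω ∂P ≤ w₀ := by
    intro n
    let σn : Ω → ℝ := (B n).piecewise σ (fun _ => T)
    have hσn0 : ∀ ω, 0 ≤ σn ω := by
      intro ω
      by_cases h : ω ∈ B n
      · simpa [σn, h] using hσ0 ω
      · simpa [σn, h] using hTn
    have hσnT : ∀ ω, σn ω ≤ T := by
      intro ω
      by_cases h : ω ∈ B n
      · simpa [σn, h] using hT ω
      · simp [σn, h]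
    have hst : IsStoppingTime 𝓕 (fun ω => (σn ω : WithTop ℝ)) := by
      intro i
      by_cases hi : T ≤ i
      · convert MeasurableSet.univ
        ext ω
        simpa using (hσnT ω).trans hi
      · convert (hBF n).2 i using 1
        ext ω
        by_cases h : ω ∈ B n
        · simp [σn, h]
        · simp [σn, h, hi]
    have hσnm : Measurable σn := hσm.piecewise (hBm n) measurable_const
    let Zn : Ω → ℝ := fun ω => (∫ s in (0:ℝ)..(σn ω), f (X s ω)) + w (X (σn ω) ω)
    have hZnm : Measurable Zn :=
      (aux_int_meas 𝓕 X hX' f hf σn hσnm T hσn0 hσnT).add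
        ((hw.comp (measurable_stoppedValue hX' hst)).mono hst.measurableSpace_le le_rfl)
    have hZni : Integrable Zn P := by
      refine Integrable.mono' ((integrable_const (Cf * T + (Cg + n))).add hZTi.abs)
        hZnm.aestronglyMeasurable (ae_of_all _ fun ω => ?_)
      have hb := aux_int_bound X f Cf hfb _ T (hσ0 ω) (hT ω) ω
      have hg1 := hgb (X (σ ω) ω)
      have hg2 := hgw (X (σ ω) ω)
      have hn : (0:ℝ) ≤ n := n.cast_nonneg
      have hCg := (abs_nonneg _).trans hg1
      simp only [Pi.add_apply, Real.norm_eq_abs]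
      by_cases h : ω ∈ B n
      · have h' : w (X (σ ω) ω) ≤ n := h
        have : |w (X (σ ω) ω)| ≤ Cg + n := by
          rw [abs_le] at hg1 ⊢
          constructor <;> linarith
        simp only [Zn, σn, piecewise_eq_of_mem _ _ _ h]
        have := abs_add_le (∫ s in (0:ℝ)..(σ ω), f (X s ω)) (w (X (σ ω) ω))
        have := abs_nonneg (ZT ω)
        linarith
      · simp only [Zn, σn, piecewise_eq_of_notMem _ _ _ h]
        have := (abs_nonneg _).trans hb
        change |ZT ω| ≤ _
        linarith
    have h0 : IsStoppingTime 𝓕 (fun _ : Ω => ((0:ℝ) : WithTop ℝ)) := isStoppingTime_const 𝓕 0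
    have hs := hZsup (fun _ => 0) σn h0 hst (fun _ => le_rfl) hσn0 ⟨T, hσnT⟩
    have h1 : ∫ ω, Zn ω ∂P ≤ w₀ := by
      rw [← integral_condExp h0.measurableSpace_le (f := Zn)]
      calc _ ≤ ∫ ω, w₀ ∂P := by
            refine integral_mono_ae integrable_condExp (integrable_const _) ?_
            filter_upwards [hs, hZ0] with ω a b
            exact a.trans b.le
        _ = w₀ := by simp
    refine le_trans (integral_mono_ae (hDi n) hZni ?_) h1
    filter_upwards [hHZ] with ω h
    by_cases hω : ω ∈ B n
    · simpa only [D, Zn, σn, piecewise_eq_of_mem _ _ _ hω] using h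
    · simp only [D, Zn, σn, piecewise_eq_of_notMem _ _ _ hω]
      exact le_rfl
  have hlim : Tendsto (fun n => ∫ ω, D n ω ∂P) atTop (𝓝 (∫ ω, H ω ∂P)) := by
    refine tendsto_integral_of_dominated_convergence (fun ω => |H ω| + |ZT ω|)
      (fun n => (hDi n).aestronglyMeasurable) (hHi.abs.add hZTi.abs) ?_ ?_
    · intro n
      refine ae_of_all _ fun ω => ?_
      have := abs_nonneg (H ω)
      have := abs_nonneg (ZT ω)
      by_cases hω : ω ∈ B n
      · simp only [D, piecewise_eq_of_mem _ _ _ hω, Real.norm_eq_abs]; linarith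
      · simp only [D, piecewise_eq_of_notMem _ _ _ hω, Real.norm_eq_abs]; linarith
    · refine ae_of_all _ fun ω => ?_
      obtain ⟨N, hN⟩ := exists_nat_ge (w (X (σ ω) ω))
      refine tendsto_const_nhds.congr' ?_
      filter_upwards [eventually_ge_atTop N] with n hn
      have : ω ∈ B n := hN.trans (by exact_mod_cast hn)
      simp only [D, piecewise_eq_of_mem _ _ _ this]
  have hfin : ∫ ω, H ω ∂P ≤ w₀ := le_of_tendsto' hlim key
  have hsum : ∫ ω, H ω ∂P = ∫ ω, G ω ∂P + (P A).toReal * ε := by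
    rw [hH, integral_add hGi hAi, integral_indicator_const _ hAm]
    rfl
  rw [le_div_iff₀ hε]
  linarith
end

section
/- Let (X_n)_{n∈ℕ} be a sequence of nonnegative random variables on a probability space with E[X_n] ≤ 1 for every n, and let Y be a nonnegative random variable (with possibly infinite expectation). If lim_{n→∞} P(Y > X_n) = 0, then E[Y] ≤ 1. -/
open MeasureTheory Filter Set
open scoped ENNReal Topology

/-- If `(X_n)` are nonnegative random variables with `E[X_n] ≤ 1`, `Y ≥ 0`
(possibly with infinite expectation) and `P(Y > X_n) → 0`, then `E[Y] ≤ 1`. -/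
theorem stmt4
    {Ω : Type*} [MeasurableSpace Ω] (P : Measure Ω) [IsProbabilityMeasure P]
    (X : ℕ → Ω → ℝ≥0∞) (hX : ∀ n, Measurable (X n))
    (Y : Ω → ℝ≥0∞) (hY : Measurable Y)
    (hXE : ∀ n, ∫⁻ ω, X n ω ∂P ≤ 1)
    (hlim : Filter.Tendsto (fun n => P {ω | X n ω < Y ω}) Filter.atTop (𝓝 0)) :
    ∫⁻ ω, Y ω ∂P ≤ 1 := by
  have key : ∀ k : ℕ, ∫⁻ ω, min (Y ω) (k : ℝ≥0∞) ∂P ≤ 1 := by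
    intro k
    have hb : ∀ n, ∫⁻ ω, min (Y ω) (k : ℝ≥0∞) ∂P ≤ 1 + k * P {ω | X n ω < Y ω} := by
      intro n
      have hm : MeasurableSet {ω | X n ω < Y ω} := measurableSet_lt (hX n) hY
      calc ∫⁻ ω, min (Y ω) (k : ℝ≥0∞) ∂P
          ≤ ∫⁻ ω, (X n ω + {ω | X n ω < Y ω}.indicator (fun _ => (k : ℝ≥0∞)) ω) ∂P := by
            apply lintegral_mono
            intro ω
            by_cases h : X n ω < Y ω
            · simp only [Set.indicator, Set.mem_setOf_eq, h, if_true]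
              exact (min_le_right _ _).trans le_add_self
            · simp only [Set.indicator, Set.mem_setOf_eq, h, if_false, add_zero]
              exact (min_le_left _ _).trans (not_lt.mp h)
        _ = ∫⁻ ω, X n ω ∂P + k * P {ω | X n ω < Y ω} := by
            rw [lintegral_add_left (hX n), lintegral_indicator_const hm]
        _ ≤ _ := by gcongr; exact hXE n
    have ht : Tendsto (fun n => 1 + (k : ℝ≥0∞) * P {ω | X n ω < Y ω}) atTop (𝓝 (1 + k * 0)) :=
      tendsto_const_nhds.add
        (ENNReal.Tendsto.const_mul hlim (Or.inr (ENNReal.natCast_ne_top k)))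
    simpa using ge_of_tendsto' ht hb
  have hsup : ∀ ω, Y ω = ⨆ k : ℕ, min (Y ω) (k : ℝ≥0∞) := by
    intro ω
    have h := inf_iSup_eq (Y ω) (fun k : ℕ => (k : ℝ≥0∞))
    rw [ENNReal.iSup_natCast, inf_top_eq] at h
    exact h
  calc ∫⁻ ω, Y ω ∂P = ∫⁻ ω, ⨆ k : ℕ, min (Y ω) (k : ℝ≥0∞) ∂P := lintegral_congr hsup
    _ = ⨆ k : ℕ, ∫⁻ ω, min (Y ω) (k : ℝ≥0∞) ∂P := by
        apply lintegral_iSup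
        · intro k
          exact hY.min measurable_const
        · intro a b hab ω
          exact min_le_min_left _ (by exact_mod_cast hab)
    _ ≤ 1 := iSup_le key
end

section
/- Assume f, g : E → ℝ are bounded and continuous, X has right-continuous paths and is quasi-left-continuous (for every nondecreasing sequence of stopping times τ_n with a.s. finite limit τ, X_{τ_n} → X_τ a.s.). Let w : E → ℝ be lower semicontinuous with w ≥ g pointwise. For a stopping time τ set V(τ) := limsup_{T→∞} E[∫₀^{τ∧T} f(X_s) ds + g(X_{τ∧T})], and let w₀ := sup_τ V(τ), the supremum over all stopping times. Assume: (i) Z_t := ∫₀^t f(X_s) ds + w(X_t) consists of integrable random variables, is adapted, satisfies the optional-sampling supermartingale property, and Z_0 = w₀ a.s.; (ii) there exist d < 0 and γ ∈ ℝ such that E[∫₀^{τ∧T} (f(X_s) − d) ds] ≤ γ for every stopping time τ and every T ≥ 0; (iii) there exists a nondecreasing sequence (σ_m) of bounded stopping times with V(σ_m) ≥ w₀ − 1/m for every m ≥ 1; (iv) for every ε ≥ 0 the random time τ_ε := inf{t ≥ 0 : g(X_t) ≥ w(X_t) − ε} is a stopping time, and write τ* := τ_0. Then τ* is a.s. finite,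 E[τ*] ≤ (γ + 2‖g‖ + 1)/(−d), and τ* is optimal: E[∫₀^{τ*} f(X_s) ds + g(X_{τ*})] = w₀. -/
open MeasureTheory Filter Set
open scoped ENNReal Topology Classical

/-- The expected payoff `E[∫₀^{τ∧T} f(X_s) ds + g(X_{τ∧T})]` of stopping at the
(possibly infinite) stopping time `τ` truncated at horizon `T`. -/
noncomputable def truncPayoff {Ω E : Type*} [MeasurableSpace Ω]
    (P : Measure Ω) (X : ℝ → Ω → E) (f g : E → ℝ) (τ : Ω → ℝ≥0∞) (T : ℝ) : ℝ :=
  ∫ ω, ((∫ s in (0:ℝ)..((min (τ ω) (ENNReal.ofReal T)).toReal), f (X s ω))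
      + g (X ((min (τ ω) (ENNReal.ofReal T)).toReal) ω)) ∂P

/-- The value `V(τ) = limsup_{T→∞} E[∫₀^{τ∧T} f(X_s) ds + g(X_{τ∧T})]`. -/
noncomputable def stopValue {Ω E : Type*} [MeasurableSpace Ω]
    (P : Measure Ω) (X : ℝ → Ω → E) (f g : E → ℝ) (τ : Ω → ℝ≥0∞) : ℝ :=
  Filter.limsup (fun T : ℝ => truncPayoff P X f g τ T) Filter.atTop

/-- The hitting time `τ_ε = inf {t ≥ 0 : g(X_t) ≥ w(X_t) − ε}`, with value `∞` if no such
time exists. -/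
noncomputable def hitTime {Ω E : Type*} (X : ℝ → Ω → E) (g w : E → ℝ) (ε : ℝ)
    (ω : Ω) : ℝ≥0∞ :=
  sInf (ENNReal.ofReal '' {t : ℝ | 0 ≤ t ∧ w (X t ω) - ε ≤ g (X t ω)})

section Helpers

variable {Ω : Type*} {m0 : MeasurableSpace Ω}

lemma s5_joint {E : Type*} [TopologicalSpace E] [TopologicalSpace.PseudoMetrizableSpace E]
    [MeasurableSpace E] [BorelSpace E] (𝓕 : Filtration ℝ m0) (X : ℝ → Ω → E)
    (hX : IsStronglyProgressive 𝓕 X) : Measurable (fun p : ℝ × Ω => X p.1 p.2) := by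
  have h : ∀ n : ℕ, Measurable (fun p : Set.Iic (n : ℝ) × Ω => X p.1 p.2) := by
    intro n
    have := (hX (n : ℝ)).measurable
    refine this.mono ?_ le_rfl
    exact sup_le_sup le_rfl (MeasurableSpace.comap_mono (𝓕.le _))
  intro s hs
  have : (fun p : ℝ × Ω => X p.1 p.2) ⁻¹' s =
      ⋃ n : ℕ, (fun p : Set.Iic (n : ℝ) × Ω => ((p.1 : ℝ), p.2)) ''
        ((fun p : Set.Iic (n : ℝ) × Ω => X p.1 p.2) ⁻¹' s) := by
    ext ⟨t, ω⟩
    simp only [Set.mem_preimage, Set.mem_iUnion, Set.mem_image, Prod.exists, Prod.mk.injEq,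
      Subtype.exists, Set.mem_Iic]
    constructor
    · intro hh
      obtain ⟨n, hn⟩ := exists_nat_ge t
      exact ⟨n, t, hn, ω, hh, rfl, rfl⟩
    · rintro ⟨n, a, ha, b, hh, rfl, rfl⟩
      exact hh
  rw [this]
  refine MeasurableSet.iUnion fun n => ?_
  have hemb : MeasurableEmbedding (fun p : Set.Iic (n : ℝ) × Ω => ((p.1 : ℝ), p.2)) :=
    (MeasurableEmbedding.subtype_coe measurableSet_Iic).prodMap MeasurableEmbedding.id
  exact hemb.measurableSet_image' (h n hs)

lemma s5_intmeas (F : ℝ → Ω → ℝ) (hF : Measurable (fun p : ℝ × Ω => F p.1 p.2))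
    (σ : Ω → ℝ) (hσ : Measurable σ) (h0 : ∀ ω, 0 ≤ σ ω) :
    Measurable (fun ω => ∫ s in (0:ℝ)..(σ ω), F s ω) := by
  have : (fun ω => ∫ s in (0:ℝ)..(σ ω), F s ω) =
      fun ω => ∫ s, ({p : Ω × ℝ | 0 < p.2 ∧ p.2 ≤ σ p.1}.indicator
        (fun p : Ω × ℝ => F p.2 p.1)) (ω, s) := by
    ext ω
    rw [intervalIntegral.integral_of_le (h0 ω), ← integral_indicator measurableSet_Ioc]
    rfl
  rw [this]
  have hm : Measurable ({p : Ω × ℝ | 0 < p.2 ∧ p.2 ≤ σ p.1}.indicator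
        (fun p : Ω × ℝ => F p.2 p.1)) := by
    refine Measurable.indicator (hF.comp measurable_swap) ?_
    exact (measurableSet_lt measurable_const measurable_snd).inter
      (measurableSet_le measurable_snd (hσ.comp measurable_fst))
  exact (hm.stronglyMeasurable.integral_prod_right' (ν := volume)).measurable

lemma s5_intble (F : ℝ → Ω → ℝ) (hF : Measurable (fun p : ℝ × Ω => F p.1 p.2)) (C : ℝ)
    (hC : ∀ s ω, |F s ω| ≤ C) (ω : Ω) (a b : ℝ) :
    IntervalIntegrable (fun s => F s ω) volume a b := by
  have hm : Measurable (fun s => F s ω) := hF.comp (measurable_id.prodMk measurable_const)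
  refine (intervalIntegrable_const (c := C)).mono_fun hm.aestronglyMeasurable ?_
  refine Eventually.of_forall fun s => ?_
  have := hC s ω
  exact this.trans (le_abs_self _)

lemma s5_lip (F : ℝ → Ω → ℝ) (hF : Measurable (fun p : ℝ × Ω => F p.1 p.2)) (C : ℝ)
    (hC : ∀ s ω, |F s ω| ≤ C) (ω : Ω) (a b : ℝ) :
    |(∫ s in (0:ℝ)..b, F s ω) - ∫ s in (0:ℝ)..a, F s ω| ≤ C * |b - a| := by
  rw [intervalIntegral.integral_interval_sub_left (s5_intble F hF C hC ω _ _)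
    (s5_intble F hF C hC ω _ _), ← Real.norm_eq_abs]
  exact intervalIntegral.norm_integral_le_of_norm_le_const fun s _ => hC s ω

lemma s5_bd (F : ℝ → Ω → ℝ) (C : ℝ)
    (hC : ∀ s ω, |F s ω| ≤ C) (ω : Ω) (b : ℝ) (hb : 0 ≤ b) :
    |∫ s in (0:ℝ)..b, F s ω| ≤ C * b := by
  have := intervalIntegral.norm_integral_le_of_norm_le_const (f := fun s => F s ω)
    (a := 0) (b := b) (C := C) fun s _ => hC s ω
  rwa [sub_zero, abs_of_nonneg hb, Real.norm_eq_abs] at this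

lemma s5_tend (F : ℝ → Ω → ℝ) (hF : Measurable (fun p : ℝ × Ω => F p.1 p.2)) (C : ℝ)
    (hC : ∀ s ω, |F s ω| ≤ C) (ω : Ω) {ι : Type*} {l : Filter ι} (u : ι → ℝ) (a : ℝ)
    (hu : Tendsto u l (𝓝 a)) :
    Tendsto (fun i => ∫ s in (0:ℝ)..(u i), F s ω) l (𝓝 (∫ s in (0:ℝ)..a, F s ω)) := by
  rw [tendsto_iff_dist_tendsto_zero]
  have h2 : Tendsto (fun i => C * |u i - a|) l (𝓝 0) := by
    have := (tendsto_iff_dist_tendsto_zero.1 hu).const_mul C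
    simpa [Real.dist_eq] using this
  refine squeeze_zero (fun _ => dist_nonneg) (fun i => ?_) h2
  rw [Real.dist_eq]
  exact s5_lip F hF C hC ω a (u i)

lemma s5_liminf (x : ℝ) (u : ℕ → ℝ) (h : ∀ a < x, ∀ᶠ n in atTop, a < u n) :
    ENNReal.ofReal x ≤ liminf (fun n => ENNReal.ofReal (u n)) atTop := by
  refine le_of_forall_lt fun c hc => ?_
  have hc' : c.toReal < x := ENNReal.lt_ofReal_iff_toReal_lt (ne_top_of_lt hc) |>.1 hc
  obtain ⟨a, ha1, ha2⟩ := exists_between hc'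
  have hca : c < ENNReal.ofReal a := (ENNReal.lt_ofReal_iff_toReal_lt (ne_top_of_lt hc)).2 ha1
  refine lt_of_lt_of_le hca (le_liminf_of_le (by isBoundedDefault) ?_)
  filter_upwards [h a ha2] with n hn
  exact ENNReal.ofReal_le_ofReal hn.le

lemma s5_disc (𝓕 : Filtration ℝ m0) (σ : Ω → ℝ)
    (hσ : IsStoppingTime 𝓕 (fun ω => (σ ω : WithTop ℝ))) (N : ℝ) (hN : 0 < N) :
    IsStoppingTime 𝓕 (fun ω => (((⌊N * σ ω⌋ + 1 : ℝ) / N : ℝ) : WithTop ℝ)) := by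
  intro t
  have hq : (⌊N * t⌋ : ℝ) / N ≤ t := by
    rw [div_le_iff₀ hN, mul_comm]; exact Int.floor_le _
  have := hσ.measurableSet_lt_le hq
  convert this using 1
  ext ω
  simp only [Set.mem_ofPred_eq, WithTop.coe_le_coe, WithTop.coe_lt_coe]
  rw [div_le_iff₀ hN, lt_div_iff₀ hN, mul_comm t N, mul_comm (σ ω) N]
  rw [← Int.floor_lt, ← Int.add_one_le_iff, Int.le_floor]
  push_cast
  rfl

lemma s5_meas (𝓕 : Filtration ℝ m0) (σ : Ω → ℝ)
    (hσ : IsStoppingTime 𝓕 (fun ω => (σ ω : WithTop ℝ))) : Measurable σ := by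
  refine measurable_of_Iic fun t => ?_
  have := 𝓕.le t _ (hσ t)
  convert this using 1
  ext ω
  simp

lemma s5_hit_attained {E : Type*} [TopologicalSpace E] (X : ℝ → Ω → E)
    (hrc : ∀ ω, ∀ t : ℝ, 0 ≤ t → ContinuousWithinAt (fun s => X s ω) (Ici t) t)
    (g w : E → ℝ) (hgc : Continuous g) (hwlsc : LowerSemicontinuous w) (ω : Ω)
    (h : hitTime X g w 0 ω < ⊤) :
    w (X (hitTime X g w 0 ω).toReal ω) ≤ g (X (hitTime X g w 0 ω).toReal ω) := by
  by_contra! hlt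
  set r := (hitTime X g w 0 ω).toReal with hr
  have hr0 : 0 ≤ r := ENNReal.toReal_nonneg
  have hor : ENNReal.ofReal r = hitTime X g w 0 ω := ENNReal.ofReal_toReal h.ne
  obtain ⟨c, hc1, hc2⟩ := exists_between hlt
  have e1 : ∀ᶠ s in 𝓝[≥] r, c < w (X s ω) := (hrc ω r hr0).eventually (hwlsc _ c hc2)
  have e2 : ∀ᶠ s in 𝓝[≥] r, g (X s ω) < c :=
    (hrc ω r hr0).eventually (hgc.continuousAt.eventually (gt_mem_nhds hc1))
  obtain ⟨u, hu, hsub⟩ := mem_nhdsGE_iff_exists_Ico_subset.1 (e1.and e2)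
  have hlt2 : hitTime X g w 0 ω < ENNReal.ofReal u := by
    rw [← hor]; exact (ENNReal.ofReal_lt_ofReal_iff (lt_of_le_of_lt hr0 hu)).2 hu
  unfold hitTime at hlt2
  obtain ⟨_, ⟨t, ⟨ht0, ht⟩, rfl⟩, htu⟩ := sInf_lt_iff.1 hlt2
  have hle : hitTime X g w 0 ω ≤ ENNReal.ofReal t := sInf_le ⟨t, ⟨ht0, ht⟩, rfl⟩
  rw [← hor, ENNReal.ofReal_le_ofReal_iff ht0] at hle
  have htu' : t < u := (ENNReal.ofReal_lt_ofReal_iff (lt_of_le_of_lt hr0 hu)).1 htu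
  have := hsub ⟨hle, htu'⟩
  simp only [Set.mem_ofPred_eq] at this
  linarith [this.1, this.2]

lemma s5_hit_meas (𝓕 : Filtration ℝ m0) (τ : Ω → ℝ≥0∞)
    (h : ∀ t : ℝ, MeasurableSet[𝓕 t] {ω | τ ω ≤ ENNReal.ofReal t}) : Measurable τ := by
  refine measurable_of_Iic fun a => ?_
  by_cases ha : a = ⊤
  · subst ha; simp
  · rw [← ENNReal.ofReal_toReal ha]
    exact 𝓕.le _ _ (h a.toReal)

lemma s5_minst (𝓕 : Filtration ℝ m0) (τ : Ω → ℝ≥0∞)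
    (h : ∀ t : ℝ, MeasurableSet[𝓕 t] {ω | τ ω ≤ ENNReal.ofReal t}) (σ : Ω → ℝ)
    (hσ : IsStoppingTime 𝓕 (fun ω => (σ ω : WithTop ℝ))) :
    IsStoppingTime 𝓕 (fun ω => (((min (τ ω) (ENNReal.ofReal (σ ω))).toReal : ℝ) : WithTop ℝ)) := by
  intro t
  by_cases ht : 0 ≤ t
  · have := (h t).union (hσ t)
    convert this using 1
    ext ω
    simp only [Set.mem_ofPred_eq, WithTop.coe_le_coe, Set.mem_union]
    rw [← ENNReal.ofReal_le_ofReal_iff ht, ENNReal.ofReal_toReal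
      (ne_top_of_le_ne_top ENNReal.ofReal_ne_top (min_le_right _ _)), min_le_iff,
      ENNReal.ofReal_le_ofReal_iff ht]
  · convert @MeasurableSet.empty _ (𝓕 t) using 1
    ext ω
    simp only [Set.mem_ofPred_eq, WithTop.coe_le_coe, Set.mem_empty_iff_false, iff_false]
    intro hh
    exact ht (ENNReal.toReal_nonneg.trans hh)

end Helpers

/-- existence, integrability and optimality of the stopping time
`τ* = inf{t ≥ 0 : g(X_t) ≥ w(X_t)}` for the undiscounted infinite-horizon stopping
problem with value `w₀`. -/
theorem stmt5
    {Ω : Type*} {m0 : MeasurableSpace Ω} (P : Measure Ω) [IsProbabilityMeasure P]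
    (𝓕 : Filtration ℝ m0)
    {E : Type*} [MetricSpace E] [MeasurableSpace E] [BorelSpace E]
    (X : ℝ → Ω → E) (hX : ProgMeasurable 𝓕 X)
    -- right-continuous paths
    (hrc : ∀ ω, ∀ t : ℝ, 0 ≤ t → ContinuousWithinAt (fun s => X s ω) (Ici t) t)
    -- quasi-left-continuity
    (hqlc : ∀ (τn : ℕ → Ω → ℝ) (τ : Ω → ℝ),
      (∀ n, IsStoppingTime 𝓕 (fun ω => (τn n ω : WithTop ℝ))) → (∀ n ω, 0 ≤ τn n ω) →
      (∀ ω, Monotone fun n => τn n ω) →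
      (∀ᵐ ω ∂P, Tendsto (fun n => τn n ω) atTop (𝓝 (τ ω))) →
      ∀ᵐ ω ∂P, Tendsto (fun n => X (τn n ω) ω) atTop (𝓝 (X (τ ω) ω)))
    (f g : E → ℝ) (hfc : Continuous f) (hgc : Continuous g)
    (Cf Cg : ℝ) (hfb : ∀ x, |f x| ≤ Cf) (hgb : ∀ x, |g x| ≤ Cg)
    (w : E → ℝ) (hwlsc : LowerSemicontinuous w) (hgw : ∀ x, g x ≤ w x)
    (w₀ : ℝ)
    -- w₀ is the supremum of V(τ) over all stopping times τ
    (hub : ∀ τ : Ω → ℝ≥0∞,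
      (∀ t : ℝ, MeasurableSet[𝓕 t] {ω | τ ω ≤ ENNReal.ofReal t}) →
      stopValue P X f g τ ≤ w₀)
    -- (i) Z is an integrable adapted optional-sampling supermartingale with Z_0 = w₀
    (hZint : ∀ t : ℝ, 0 ≤ t →
      Integrable (fun ω => (∫ s in (0:ℝ)..t, f (X s ω)) + w (X t ω)) P)
    (hZadp : ∀ t : ℝ, 0 ≤ t →
      StronglyMeasurable[𝓕 t] fun ω => (∫ s in (0:ℝ)..t, f (X s ω)) + w (X t ω))
    (hZsup : ∀ (σ₁ σ₂ : Ω → ℝ) (h1 : IsStoppingTime 𝓕 (fun ω => (σ₁ ω : WithTop ℝ)))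
      (_h2 : IsStoppingTime 𝓕 (fun ω => (σ₂ ω : WithTop ℝ))),
      (∀ ω, 0 ≤ σ₁ ω) → (∀ ω, σ₁ ω ≤ σ₂ ω) → (∃ T, ∀ ω, σ₂ ω ≤ T) →
      ∀ᵐ ω ∂P,
        (P[(fun ω' => (∫ s in (0:ℝ)..(σ₂ ω'), f (X s ω')) + w (X (σ₂ ω') ω')) |
            h1.measurableSpace]) ω
          ≤ (∫ s in (0:ℝ)..(σ₁ ω), f (X s ω)) + w (X (σ₁ ω) ω))
    (hZ0 : ∀ᵐ ω ∂P, (∫ s in (0:ℝ)..(0:ℝ), f (X s ω)) + w (X 0 ω) = w₀)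
    -- (ii) assumption (B1)
    (d γ : ℝ) (hd : d < 0)
    (hγ : ∀ τ : Ω → ℝ≥0∞,
      (∀ t : ℝ, MeasurableSet[𝓕 t] {ω | τ ω ≤ ENNReal.ofReal t}) →
      ∀ T : ℝ, 0 ≤ T →
      ∫ ω, (∫ s in (0:ℝ)..((min (τ ω) (ENNReal.ofReal T)).toReal),
        (f (X s ω) - d)) ∂P ≤ γ)
    -- (iii) a nondecreasing sequence of bounded 1/m-optimal stopping times
    (σm : ℕ → Ω → ℝ) (hσmst : ∀ m, IsStoppingTime 𝓕 (fun ω => (σm m ω : WithTop ℝ)))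
    (hσm0 : ∀ m ω, 0 ≤ σm m ω) (hσmb : ∀ m, ∃ T, ∀ ω, σm m ω ≤ T)
    (hσmmono : ∀ ω, Monotone fun m => σm m ω)
    (hσmopt : ∀ m : ℕ, 1 ≤ m →
      w₀ - 1 / (m : ℝ) ≤ stopValue P X f g (fun ω => ENNReal.ofReal (σm m ω)))
    -- (iv) the hitting times τ_ε are stopping times
    (hhit : ∀ ε : ℝ, 0 ≤ ε →
      ∀ t : ℝ, MeasurableSet[𝓕 t] {ω | hitTime X g w ε ω ≤ ENNReal.ofReal t}) :
    (∀ᵐ ω ∂P, hitTime X g w 0 ω < ⊤) ∧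
    (∫ ω, (hitTime X g w 0 ω).toReal ∂P ≤ (γ + 2 * Cg + 1) / (-d)) ∧
    (∫ ω, ((∫ s in (0:ℝ)..((hitTime X g w 0 ω).toReal), f (X s ω))
        + g (X ((hitTime X g w 0 ω).toReal) ω)) ∂P = w₀) := by
  have hXm : Measurable (fun p : ℝ × Ω => X p.1 p.2) := s5_joint 𝓕 X hX
  have hFm : Measurable (fun p : ℝ × Ω => f (X p.1 p.2)) := hfc.measurable.comp hXm
  have hFb : ∀ s ω, |f (X s ω)| ≤ Cf := fun s ω => hfb _
  have hXσ : ∀ σ : Ω → ℝ, Measurable σ → Measurable (fun ω => X (σ ω) ω) := fun σ hσ =>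
    hXm.comp (hσ.prodMk measurable_id)
  have hwm : Measurable w := hwlsc.measurable
  have hgm : Measurable g := hgc.measurable
  obtain ⟨ω0⟩ : Nonempty Ω := P.nonempty_of_neZero
  have hCf0 : 0 ≤ Cf := (abs_nonneg _).trans (hfb (X 0 ω0))
  have hCg0 : 0 ≤ Cg := (abs_nonneg _).trans (hgb (X 0 ω0))
  -- the process Z
  set A : (Ω → ℝ) → Ω → ℝ := fun σ ω => ∫ s in (0:ℝ)..(σ ω), f (X s ω) with hA
  have hAm : ∀ σ : Ω → ℝ, Measurable σ → (∀ ω, 0 ≤ σ ω) → Measurable (A σ) := fun σ hσ h0 =>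
    s5_intmeas (fun s ω => f (X s ω)) hFm σ hσ h0
  have hAb : ∀ (σ : Ω → ℝ) ω, 0 ≤ σ ω → |A σ ω| ≤ Cf * σ ω := fun σ ω h0 =>
    s5_bd (fun s ω => f (X s ω)) Cf hFb ω _ h0
  -- expectations comparison
  have hcmp : ∀ (σ₁ σ₂ : Ω → ℝ), IsStoppingTime 𝓕 (fun ω => (σ₁ ω : WithTop ℝ)) →
      IsStoppingTime 𝓕 (fun ω => (σ₂ ω : WithTop ℝ)) →
      (∀ ω, 0 ≤ σ₁ ω) → (∀ ω, σ₁ ω ≤ σ₂ ω) → (∃ T, ∀ ω, σ₂ ω ≤ T) →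
      Integrable (fun ω => A σ₁ ω + w (X (σ₁ ω) ω)) P →
      ∫ ω, (A σ₂ ω + w (X (σ₂ ω) ω)) ∂P ≤ ∫ ω, (A σ₁ ω + w (X (σ₁ ω) ω)) ∂P := by
    intro σ₁ σ₂ h1 h2 h0 hle hT hi
    have h := hZsup σ₁ σ₂ h1 h2 h0 hle hT
    have hm := h1.measurableSpace_le
    rw [← integral_condExp hm]
    exact integral_mono_ae integrable_condExp hi h
  have hst0 : IsStoppingTime 𝓕 (fun _ : Ω => ((0:ℝ) : WithTop ℝ)) := isStoppingTime_const 𝓕 0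
  have hE0 : ∫ ω, (A (fun _ => 0) ω + w (X 0 ω)) ∂P = w₀ := by
    rw [integral_congr_ae (g := fun _ => w₀) hZ0]; simp
  have hle0 : ∀ σ : Ω → ℝ, IsStoppingTime 𝓕 (fun ω => (σ ω : WithTop ℝ)) →
      (∀ ω, 0 ≤ σ ω) → (∃ T, ∀ ω, σ ω ≤ T) →
      ∫ ω, (A σ ω + w (X (σ ω) ω)) ∂P ≤ w₀ := by
    intro σ hσ h0 hT
    refine (hcmp (fun _ => 0) σ hst0 hσ (fun _ => le_rfl) h0 hT (hZint 0 le_rfl)).trans hE0.le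
  -- integrability of Z at bounded stopping times
  have hint : ∀ σ : Ω → ℝ, IsStoppingTime 𝓕 (fun ω => (σ ω : WithTop ℝ)) →
      (∀ ω, 0 ≤ σ ω) → (∃ T, ∀ ω, σ ω ≤ T) →
      Integrable (fun ω => A σ ω + w (X (σ ω) ω)) P := by
    intro σ hσ h0 ⟨T, hT⟩
    have hσm := s5_meas 𝓕 σ hσ
    have hT0 : 0 ≤ T := (h0 ω0).trans (hT ω0)
    set D : ℕ → Ω → ℝ := fun n ω => ((⌊((n:ℝ) + 1) * σ ω⌋ : ℝ) + 1) / ((n:ℝ) + 1) with hD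
    have hN : ∀ n : ℕ, (0:ℝ) < (n:ℝ) + 1 := fun n => by positivity
    have hDst : ∀ n, IsStoppingTime 𝓕 (fun ω => (D n ω : WithTop ℝ)) := fun n =>
      s5_disc 𝓕 σ hσ _ (hN n)
    have hDm : ∀ n, Measurable (D n) := fun n => s5_meas 𝓕 _ (hDst n)
    have hDge : ∀ n ω, σ ω ≤ D n ω := by
      intro n ω
      rw [hD]; simp only
      rw [le_div_iff₀ (hN n), mul_comm]
      exact (Int.lt_floor_add_one _).le
    have hDle : ∀ n ω, D n ω ≤ σ ω + 1 / ((n:ℝ) + 1) := by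
      intro n ω
      rw [hD]; simp only
      have e : (σ ω + 1 / ((n:ℝ) + 1)) * ((n:ℝ) + 1) = ((n:ℝ) + 1) * σ ω + 1 := by
        have := (hN n).ne'
        field_simp
      rw [div_le_iff₀ (hN n), e]
      linarith [Int.floor_le (((n:ℝ) + 1) * σ ω)]
    have hDle1 : ∀ n ω, D n ω ≤ T + 1 := by
      intro n ω
      have h1 : 1 / ((n:ℝ) + 1) ≤ 1 := by
        rw [div_le_one (hN n)]; linarith [(Nat.cast_nonneg n : (0:ℝ) ≤ n)]
      linarith [hDle n ω, hT ω]
    have hD0 : ∀ n ω, 0 ≤ D n ω := fun n ω => (h0 ω).trans (hDge n ω)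
    have hDt : ∀ ω, Tendsto (fun n => D n ω) atTop (𝓝 (σ ω)) := by
      intro ω
      refine tendsto_of_tendsto_of_tendsto_of_le_of_le tendsto_const_nhds ?_
        (fun n => hDge n ω) (fun n => hDle n ω)
      simpa using tendsto_const_nhds.add (tendsto_one_div_add_atTop_nhds_zero_nat (𝕜 := ℝ))
    have hDint : ∀ n, Integrable (fun ω => A (D n) ω + w (X (D n ω) ω)) P := by
      intro n
      have hb : Integrable (fun ω => ∑ k ∈ Finset.range (⌊((n:ℝ)+1) * T⌋₊ + 2),
          |(∫ s in (0:ℝ)..((k:ℝ) / ((n:ℝ)+1)), f (X s ω)) + w (X ((k:ℝ) / ((n:ℝ)+1)) ω)|) P := by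
        refine integrable_finsetSum _ fun k _ => (hZint _ ?_).abs
        positivity
      refine hb.mono' ((hAm _ (hDm n) (hD0 n)).add
        (hwm.comp (hXσ _ (hDm n)))).aestronglyMeasurable ?_
      refine Eventually.of_forall fun ω => ?_
      have hnn : 0 ≤ ((n:ℝ)+1) * σ ω := mul_nonneg (hN n).le (h0 ω)
      have hk : D n ω = ((⌊((n:ℝ)+1) * σ ω⌋₊ + 1 : ℕ) : ℝ) / ((n:ℝ)+1) := by
        rw [hD]; simp only
        push_cast
        rw [natCast_floor_eq_intCast_floor hnn]
      have hmem : ⌊((n:ℝ)+1) * σ ω⌋₊ + 1 ∈ Finset.range (⌊((n:ℝ)+1) * T⌋₊ + 2) := by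
        rw [Finset.mem_range]
        have : ⌊((n:ℝ)+1) * σ ω⌋₊ ≤ ⌊((n:ℝ)+1) * T⌋₊ :=
          Nat.floor_le_floor (mul_le_mul_of_nonneg_left (hT ω) (hN n).le)
        omega
      rw [Real.norm_eq_abs, hA]
      simp only [hk]
      exact Finset.single_le_sum (f := fun k : ℕ => |(∫ s in (0:ℝ)..((k:ℝ) / ((n:ℝ)+1)), f (X s ω)) +
        w (X ((k:ℝ) / ((n:ℝ)+1)) ω)|) (fun _ _ => abs_nonneg _) hmem
    set K : ℝ := Cf * (T + 1) + Cg with hK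
    have hKpos : ∀ ρ : Ω → ℝ, ∀ ω, 0 ≤ ρ ω → ρ ω ≤ T + 1 →
        0 ≤ A ρ ω + w (X (ρ ω) ω) + K := by
      intro ρ ω h1 h2
      have a1 := neg_le_of_abs_le (hAb ρ ω h1)
      have a2 := neg_le_of_abs_le (hgb (X (ρ ω) ω))
      have a3 := hgw (X (ρ ω) ω)
      have a4 : Cf * ρ ω ≤ Cf * (T + 1) := mul_le_mul_of_nonneg_left h2 hCf0
      linarith
    have hfat : ∫⁻ ω, ENNReal.ofReal (A σ ω + w (X (σ ω) ω) + K) ∂P ≤ ENNReal.ofReal (w₀ + K) := by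
      calc ∫⁻ ω, ENNReal.ofReal (A σ ω + w (X (σ ω) ω) + K) ∂P
          ≤ ∫⁻ ω, liminf (fun n => ENNReal.ofReal (A (D n) ω + w (X (D n ω) ω) + K)) atTop ∂P := by
            refine lintegral_mono fun ω => s5_liminf _ _ fun a ha => ?_
            have hAt : Tendsto (fun n => A (D n) ω) atTop (𝓝 (A σ ω)) :=
              s5_tend (fun s ω => f (X s ω)) hFm Cf hFb ω _ _ (hDt ω)
            have hXt : Tendsto (fun n => X (D n ω) ω) atTop (𝓝 (X (σ ω) ω)) := by
              refine Tendsto.comp (hrc ω (σ ω) (h0 ω)) ?_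
              exact tendsto_nhdsWithin_iff.2 ⟨hDt ω, Eventually.of_forall fun n => hDge n ω⟩
            set ε := (A σ ω + w (X (σ ω) ω) + K - a) / 2 with hε
            have hεp : 0 < ε := by rw [hε]; linarith
            have e1 := hAt.eventually (lt_mem_nhds (show A σ ω - ε < A σ ω by linarith))
            have e2 := hXt.eventually (hwlsc _ (w (X (σ ω) ω) - ε) (by linarith))
            filter_upwards [e1, e2] with n h1 h2
            linarith
        _ ≤ liminf (fun n => ∫⁻ ω, ENNReal.ofReal (A (D n) ω + w (X (D n ω) ω) + K) ∂P) atTop :=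
            lintegral_liminf_le fun n => (((hAm _ (hDm n) (hD0 n)).add
              (hwm.comp (hXσ _ (hDm n)))).add_const K).ennreal_ofReal
        _ ≤ ENNReal.ofReal (w₀ + K) := by
            refine liminf_le_of_le (by isBoundedDefault) fun b hb => ?_
            obtain ⟨n, hn⟩ := hb.exists
            refine hn.trans ?_
            have hDK : Integrable (fun ω => A (D n) ω + w (X (D n ω) ω) + K) P :=
              (hDint n).add (integrable_const K)
            rw [← ofReal_integral_eq_lintegral_ofReal hDK
              (Eventually.of_forall fun ω => hKpos (D n) ω (hD0 n ω) (hDle1 n ω))]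
            refine ENNReal.ofReal_le_ofReal ?_
            have := hle0 (D n) (hDst n) (hD0 n) ⟨T + 1, hDle1 n⟩
            have e := integral_add (hDint n) (integrable_const (μ := P) K)
            simp only [integral_const, probReal_univ, one_smul] at e
            rw [e]
            linarith
    have hmeas : Measurable (fun ω => A σ ω + w (X (σ ω) ω)) :=
      (hAm _ hσm h0).add (hwm.comp (hXσ _ hσm))
    have hi : Integrable (fun ω => A σ ω + w (X (σ ω) ω) + K) P := by
      refine ⟨(hmeas.add_const K).aestronglyMeasurable, ?_⟩
      rw [hasFiniteIntegral_iff_ofReal (Eventually.of_forall fun ω =>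
        hKpos σ ω (h0 ω) ((hT ω).trans (by linarith)))]
      exact hfat.trans_lt ENNReal.ofReal_lt_top
    refine (hi.sub (integrable_const (μ := P) K)).congr (Eventually.of_forall fun ω => ?_)
    simp
  -- g-payoff integrability
  have hAint : ∀ σ : Ω → ℝ, Measurable σ → (∀ ω, 0 ≤ σ ω) → Integrable σ P →
      Integrable (A σ) P := by
    intro σ hσ h0 hi
    refine (hi.const_mul Cf).mono' (hAm σ hσ h0).aestronglyMeasurable ?_
    exact Eventually.of_forall fun ω => hAb σ ω (h0 ω)
  have hgint : ∀ σ : Ω → ℝ, Measurable σ → Integrable (fun ω => g (X (σ ω) ω)) P := by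
    intro σ hσ
    refine (integrable_const Cg).mono' (hgm.comp (hXσ σ hσ)).aestronglyMeasurable ?_
    exact Eventually.of_forall fun ω => hgb _
  have hbint : ∀ σ : Ω → ℝ, Measurable σ → (∀ ω, 0 ≤ σ ω) → (∃ T, ∀ ω, σ ω ≤ T) →
      Integrable σ P := by
    rintro σ hσ h0 ⟨T, hT⟩
    refine (integrable_const T).mono' hσ.aestronglyMeasurable ?_
    refine Eventually.of_forall fun ω => ?_
    rw [Real.norm_eq_abs, abs_of_nonneg (h0 ω)]; exact hT ω
  have hσmm : ∀ m, Measurable (σm m) := fun m => s5_meas 𝓕 _ (hσmst m)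
  have hσint : ∀ m, Integrable (σm m) P := fun m => hbint _ (hσmm m) (hσm0 m) (hσmb m)
  have hval : ∀ m : ℕ, 1 ≤ m →
      w₀ - 1 / (m:ℝ) ≤ ∫ ω, (A (σm m) ω + g (X (σm m ω) ω)) ∂P := by
    intro m hm
    refine (hσmopt m hm).trans (le_of_eq ?_)
    obtain ⟨T, hT⟩ := hσmb m
    unfold stopValue
    rw [limsup_congr (v := fun _ => ∫ ω, (A (σm m) ω + g (X (σm m ω) ω)) ∂P), limsup_const]
    filter_upwards [eventually_ge_atTop T] with S hS
    unfold truncPayoff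
    have : ∀ ω, (min (ENNReal.ofReal (σm m ω)) (ENNReal.ofReal S)).toReal = σm m ω := by
      intro ω
      rw [min_eq_left (ENNReal.ofReal_le_ofReal ((hT ω).trans hS)),
        ENNReal.toReal_ofReal (hσm0 m ω)]
    simp only [this, hA]
  have hgap_int : ∀ m, Integrable (fun ω => w (X (σm m ω) ω) - g (X (σm m ω) ω)) P := by
    intro m
    have := ((hint _ (hσmst m) (hσm0 m) (hσmb m)).sub
      (hAint _ (hσmm m) (hσm0 m) (hσint m))).sub (hgint _ (hσmm m))
    refine this.congr (Eventually.of_forall fun ω => ?_)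
    simp
  have hgap : ∀ m : ℕ, 1 ≤ m →
      ∫ ω, (w (X (σm m ω) ω) - g (X (σm m ω) ω)) ∂P ≤ 1 / (m:ℝ) := by
    intro m hm
    have h1 := hle0 _ (hσmst m) (hσm0 m) (hσmb m)
    have h2 := hval m hm
    have h3 := integral_sub (hint _ (hσmst m) (hσm0 m) (hσmb m))
      ((hAint _ (hσmm m) (hσm0 m) (hσint m)).add (hgint _ (hσmm m)))
    have h4 : ∫ ω, (w (X (σm m ω) ω) - g (X (σm m ω) ω)) ∂P =
        ∫ ω, (A (σm m) ω + w (X (σm m ω) ω)) - (A (σm m) + fun ω => g (X (σm m ω) ω)) ω ∂P := by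
      refine integral_congr_ae (Eventually.of_forall fun ω => ?_)
      simp
    rw [h4, h3]
    simp only [Pi.add_apply]
    linarith
  -- lower bound for w₀
  have hw₀ : -Cg ≤ w₀ := by
    obtain ⟨ω, hω⟩ := hZ0.exists
    rw [intervalIntegral.integral_same, zero_add] at hω
    have := neg_le_of_abs_le (hgb (X 0 ω))
    linarith [hgw (X 0 ω)]
  -- expectation bound
  set B := (γ + 2 * Cg + 1) / (-d) with hB
  have hEσ2 : ∀ m : ℕ, 2 ≤ m → ∫ ω, σm m ω ∂P ≤ B := by
    intro m hm
    set δ : ℝ := 1 / (2 * (Cf + 1)) with hδ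
    have hδ0 : 0 < δ := by positivity
    have hδC : Cf * δ ≤ 1 / 2 := by
      rw [hδ, mul_one_div, div_le_iff₀ (by positivity)]; linarith
    set ρ : Ω → ℝ := fun ω => max (σm m ω) δ with hρ
    have hρm : Measurable ρ := (hσmm m).max measurable_const
    have hρ0 : ∀ ω, 0 ≤ ρ ω := fun ω => hδ0.le.trans (le_max_right _ _)
    obtain ⟨T, hT⟩ := hσmb m
    have hρT : ∀ ω, ρ ω ≤ max T δ := fun ω => max_le_max (hT ω) le_rfl
    have hρi : Integrable ρ P := hbint ρ hρm hρ0 ⟨_, hρT⟩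
    have hst : ∀ t : ℝ, MeasurableSet[𝓕 t] {ω | ENNReal.ofReal (ρ ω) ≤ ENNReal.ofReal t} := by
      intro t
      by_cases ht : 0 ≤ t
      · by_cases htδ : δ ≤ t
        · convert hσmst m t using 1
          ext ω
          simp only [Set.mem_ofPred_eq, WithTop.coe_le_coe]
          rw [ENNReal.ofReal_le_ofReal_iff ht]
          simp [hρ, htδ]
        · convert @MeasurableSet.empty _ (𝓕 t) using 1
          ext ω
          simp only [Set.mem_ofPred_eq, Set.mem_empty_iff_false, iff_false]
          rw [ENNReal.ofReal_le_ofReal_iff ht]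
          simp [hρ, htδ]
      · convert @MeasurableSet.empty _ (𝓕 t) using 1
        ext ω
        simp only [Set.mem_ofPred_eq, Set.mem_empty_iff_false, iff_false]
        rw [ENNReal.ofReal_of_nonpos (not_le.1 ht).le]
        have : 0 < ρ ω := hδ0.trans_le (le_max_right _ _)
        simpa using this
    have hg := hγ _ hst (max T δ) (hδ0.le.trans (le_max_right _ _))
    have e1 : ∀ ω, (∫ s in (0:ℝ)..((min (ENNReal.ofReal (ρ ω)) (ENNReal.ofReal (max T δ))).toReal),
        (f (X s ω) - d)) = A ρ ω - ρ ω * d := by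
      intro ω
      rw [min_eq_left (ENNReal.ofReal_le_ofReal (hρT ω)), ENNReal.toReal_ofReal (hρ0 ω),
        intervalIntegral.integral_sub (s5_intble (fun s ω => f (X s ω)) hFm Cf hFb ω _ _)
        intervalIntegrable_const]
      simp [hA]
    simp only [e1] at hg
    rw [integral_sub (hAint ρ hρm hρ0 hρi) (hρi.mul_const d), integral_mul_const] at hg
    have e2 : ∫ ω, A (σm m) ω ∂P - 1 / 2 ≤ ∫ ω, A ρ ω ∂P := by
      have : ∫ ω, (A (σm m) ω - 1 / 2) ∂P ≤ ∫ ω, A ρ ω ∂P := by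
        refine integral_mono ((hAint _ (hσmm m) (hσm0 m) (hσint m)).sub (integrable_const _))
          (hAint ρ hρm hρ0 hρi) fun ω => ?_
        have h1 := s5_lip (fun s ω => f (X s ω)) hFm Cf hFb ω (σm m ω) (ρ ω)
        have h2 : |ρ ω - σm m ω| ≤ δ := by
          rw [abs_of_nonneg (sub_nonneg.2 (le_max_left _ _))]
          have : ρ ω ≤ σm m ω + δ := max_le (by linarith) (by linarith [hσm0 m ω])
          linarith
        have h3 := neg_le_of_abs_le h1
        have h4 : Cf * |ρ ω - σm m ω| ≤ Cf * δ := mul_le_mul_of_nonneg_left h2 hCf0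
        simp only [hA]
        linarith
      rw [integral_sub (hAint _ (hσmm m) (hσm0 m) (hσint m)) (integrable_const _)] at this
      simpa using this
    have e3 := hval m (by omega)
    rw [integral_add (hAint _ (hσmm m) (hσm0 m) (hσint m)) (hgint _ (hσmm m))] at e3
    have e4 : ∫ ω, g (X (σm m ω) ω) ∂P ≤ Cg := by
      have := integral_mono (hgint _ (hσmm m)) (integrable_const Cg)
        (fun ω => le_of_abs_le (hgb (X (σm m ω) ω)))
      simpa using this
    have e5 : 1 / (m:ℝ) ≤ 1 / 2 := by
      apply one_div_le_one_div_of_le (by norm_num)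
      exact_mod_cast hm
    have e6 : ∫ ω, σm m ω ∂P ≤ ∫ ω, ρ ω ∂P :=
      integral_mono (hσint m) hρi fun ω => le_max_left _ _
    have e7 : ∫ ω, ρ ω ∂P ≤ B := by
      rw [hB, le_div_iff₀ (by linarith)]
      linarith
    exact e6.trans e7
  have hEσ : ∀ m : ℕ, ∫ ω, σm m ω ∂P ≤ B := fun m =>
    (integral_mono (hσint m) (hσint (m + 2)) fun ω => hσmmono ω (by omega)).trans
      (hEσ2 (m + 2) (by omega))
  have hB0 : 0 ≤ B := (integral_nonneg (hσm0 0)).trans (hEσ 0)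
  set S : Ω → ℝ≥0∞ := fun ω => ⨆ m, ENNReal.ofReal (σm m ω) with hS
  have hSB : ∫⁻ ω, S ω ∂P ≤ ENNReal.ofReal B := by
    rw [hS, lintegral_iSup (fun m => (hσmm m).ennreal_ofReal)
      (fun i j hij ω => ENNReal.ofReal_le_ofReal (hσmmono ω hij))]
    refine iSup_le fun m => ?_
    rw [← ofReal_integral_eq_lintegral_ofReal (hσint m) (Eventually.of_forall (hσm0 m))]
    exact ENNReal.ofReal_le_ofReal (hEσ m)
  have hSm : Measurable S := Measurable.iSup fun m => (hσmm m).ennreal_ofReal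
  have hSfin : ∀ᵐ ω ∂P, S ω < ⊤ :=
    ae_lt_top hSm (ne_top_of_le_ne_top ENNReal.ofReal_ne_top hSB)
  have hSE : ∀ ω, Tendsto (fun m => ENNReal.ofReal (σm m ω)) atTop (𝓝 (S ω)) := fun ω =>
    tendsto_atTop_iSup fun i j hij => ENNReal.ofReal_le_ofReal (hσmmono ω hij)
  have hSt : ∀ᵐ ω ∂P, Tendsto (fun m => σm m ω) atTop (𝓝 (S ω).toReal) := by
    filter_upwards [hSfin] with ω hω
    have := (ENNReal.tendsto_toReal hω.ne).comp (hSE ω)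
    refine this.congr fun m => ?_
    simp [ENNReal.toReal_ofReal (hσm0 m ω)]
  have hXS := hqlc σm (fun ω => (S ω).toReal) hσmst hσm0 hσmmono hSt
  -- liminf of the gap
  have hlim0 : ∀ᵐ ω ∂P, liminf (fun m => ENNReal.ofReal
      (w (X (σm m ω) ω) - g (X (σm m ω) ω))) atTop = 0 := by
    have hmeasn : ∀ m, Measurable (fun ω => ENNReal.ofReal
      (w (X (σm m ω) ω) - g (X (σm m ω) ω))) := fun m =>
      ((hwm.comp (hXσ _ (hσmm m))).sub (hgm.comp (hXσ _ (hσmm m)))).ennreal_ofReal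
    have hz : ∫⁻ ω, liminf (fun m => ENNReal.ofReal
      (w (X (σm m ω) ω) - g (X (σm m ω) ω))) atTop ∂P = 0 := by
      refine le_antisymm ((lintegral_liminf_le hmeasn).trans ?_) bot_le
      have ht : Tendsto (fun m : ℕ => ENNReal.ofReal (1 / (m:ℝ))) atTop (𝓝 0) := by
        have := ENNReal.tendsto_ofReal tendsto_one_div_atTop_nhds_zero_nat
        simpa using this
      rw [← ht.liminf_eq]
      refine liminf_le_liminf ?_
      filter_upwards [eventually_ge_atTop 1] with m hm
      rw [← ofReal_integral_eq_lintegral_ofReal (hgap_int m)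
        (Eventually.of_forall fun ω => sub_nonneg.2 (hgw _))]
      exact ENNReal.ofReal_le_ofReal (hgap m hm)
    exact (lintegral_eq_zero_iff (Measurable.liminf hmeasn)).1 hz
  set τ : Ω → ℝ≥0∞ := hitTime X g w 0 with hτ
  have hτst := hhit 0 le_rfl
  rw [← hτ] at hτst
  have hτm : Measurable τ := s5_hit_meas 𝓕 τ hτst
  have hτS : ∀ᵐ ω ∂P, τ ω ≤ S ω := by
    filter_upwards [hlim0, hXS, hSfin] with ω h1 h2 h3
    have hw : ENNReal.ofReal (w (X (S ω).toReal ω) - g (X (S ω).toReal ω)) ≤ 0 := by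
      rw [← h1]
      refine s5_liminf _ _ fun a ha => ?_
      set ε := (w (X (S ω).toReal ω) - g (X (S ω).toReal ω) - a) / 2 with hε
      have hεp : 0 < ε := by rw [hε]; linarith
      have e1 := h2.eventually (hgc.continuousAt.eventually
        (gt_mem_nhds (show g (X (S ω).toReal ω) < g (X (S ω).toReal ω) + ε by linarith)))
      have e2 := h2.eventually (hwlsc _ (w (X (S ω).toReal ω) - ε) (by linarith))
      filter_upwards [e1, e2] with n h1 h2
      linarith
    have hw' := ENNReal.ofReal_eq_zero.1 (le_antisymm hw bot_le)
    rw [← ENNReal.ofReal_toReal h3.ne]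
    exact sInf_le ⟨(S ω).toReal, ⟨ENNReal.toReal_nonneg, by linarith⟩, rfl⟩
  have hτfin : ∀ᵐ ω ∂P, τ ω < ⊤ := by
    filter_upwards [hτS, hSfin] with ω h1 h2 using h1.trans_lt h2
  have hτB : ∫⁻ ω, τ ω ∂P ≤ ENNReal.ofReal B := (lintegral_mono_ae hτS).trans hSB
  have hτi : Integrable (fun ω => (τ ω).toReal) P :=
    integrable_toReal_of_lintegral_ne_top hτm.aemeasurable
      (ne_top_of_le_ne_top ENNReal.ofReal_ne_top hτB)
  refine ⟨hτfin, ?_, ?_⟩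
  · rw [integral_toReal hτm.aemeasurable hτfin]
    exact ENNReal.toReal_le_of_le_ofReal hB0 hτB
  set R : Ω → ℝ := fun ω => (τ ω).toReal with hR
  have hRm : Measurable R := hτm.ennreal_toReal
  have hR0 : ∀ ω, 0 ≤ R ω := fun ω => ENNReal.toReal_nonneg
  change ∫ ω, (A R ω + g (X (R ω) ω)) ∂P = w₀
  have hdomi : Integrable (fun ω => Cf * R ω + Cg) P := (hτi.const_mul Cf).add (integrable_const Cg)
  have hdom : ∀ (ρ : Ω → ℝ) ω, 0 ≤ ρ ω → ρ ω ≤ R ω →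
      ‖A ρ ω + g (X (ρ ω) ω)‖ ≤ Cf * R ω + Cg := by
    intro ρ ω h1 h2
    rw [Real.norm_eq_abs]
    refine (abs_add_le _ _).trans (add_le_add ((hAb ρ ω h1).trans ?_) (hgb _))
    exact mul_le_mul_of_nonneg_left h2 hCf0
  apply le_antisymm
  · have h := hub τ hτst
    have ht : Tendsto (fun T : ℝ => truncPayoff P X f g τ T) atTop
        (𝓝 (∫ ω, (A R ω + g (X (R ω) ω)) ∂P)) := by
      refine tendsto_integral_filter_of_dominated_convergence (fun ω => Cf * R ω + Cg) ?_ ?_ hdomi ?_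
      · refine Eventually.of_forall fun T => ?_
        have hm : Measurable (fun ω => (min (τ ω) (ENNReal.ofReal T)).toReal) :=
          (hτm.min measurable_const).ennreal_toReal
        exact ((hAm _ hm fun ω => ENNReal.toReal_nonneg).add
          (hgm.comp (hXσ _ hm))).aestronglyMeasurable
      · refine Eventually.of_forall fun T => ?_
        filter_upwards [hτfin] with ω hω
        exact hdom (fun ω => (min (τ ω) (ENNReal.ofReal T)).toReal) ω ENNReal.toReal_nonneg
          (ENNReal.toReal_mono hω.ne (min_le_left _ _))
      · filter_upwards [hτfin] with ω hω
        refine tendsto_const_nhds.congr' ?_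
        filter_upwards [eventually_ge_atTop (R ω)] with T hT
        have : min (τ ω) (ENNReal.ofReal T) = τ ω := by
          refine min_eq_left ?_
          rw [← ENNReal.ofReal_toReal hω.ne]
          exact ENNReal.ofReal_le_ofReal hT
        simp only [this, hA, hR]
    unfold stopValue at h
    rwa [ht.limsup_eq] at h
  · set ρ : ℕ → Ω → ℝ := fun m ω => (min (τ ω) (ENNReal.ofReal (σm m ω))).toReal with hρ
    have hρst : ∀ m, IsStoppingTime 𝓕 (fun ω => (ρ m ω : WithTop ℝ)) := fun m =>
      s5_minst 𝓕 τ hτst (σm m) (hσmst m)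
    have hρm : ∀ m, Measurable (ρ m) := fun m => s5_meas 𝓕 _ (hρst m)
    have hρ0 : ∀ m ω, 0 ≤ ρ m ω := fun m ω => ENNReal.toReal_nonneg
    have hρσ : ∀ m ω, ρ m ω ≤ σm m ω := fun m ω =>
      ENNReal.toReal_le_of_le_ofReal (hσm0 m ω) (min_le_right _ _)
    have hρb : ∀ m, ∃ T, ∀ ω, ρ m ω ≤ T := fun m => by
      obtain ⟨T, hT⟩ := hσmb m
      exact ⟨T, fun ω => (hρσ m ω).trans (hT ω)⟩
    have hρi : ∀ m, Integrable (ρ m) P := fun m => hbint _ (hρm m) (hρ0 m) (hρb m)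
    have hρmono : ∀ ω, Monotone fun m => ρ m ω := fun ω i j hij =>
      ENNReal.toReal_mono (ne_top_of_le_ne_top ENNReal.ofReal_ne_top (min_le_right _ _))
        (min_le_min le_rfl (ENNReal.ofReal_le_ofReal (hσmmono ω hij)))
    have hρt : ∀ᵐ ω ∂P, Tendsto (fun m => ρ m ω) atTop (𝓝 (R ω)) := by
      filter_upwards [hτfin, hτS] with ω h1 h2
      have := (tendsto_const_nhds (x := τ ω)).min (hSE ω)
      rw [min_eq_left h2] at this
      exact (ENNReal.tendsto_toReal h1.ne).comp this
    have hXρ := hqlc ρ R hρst hρ0 hρmono hρt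
    have hlim : Tendsto (fun m => ∫ ω, (A (ρ m) ω + g (X (ρ m ω) ω)) ∂P) atTop
        (𝓝 (∫ ω, (A R ω + g (X (R ω) ω)) ∂P)) := by
      refine tendsto_integral_of_dominated_convergence (fun ω => Cf * R ω + Cg) ?_ hdomi ?_ ?_
      · exact fun m => ((hAm _ (hρm m) (hρ0 m)).add
          (hgm.comp (hXσ _ (hρm m)))).aestronglyMeasurable
      · intro m
        filter_upwards [hτfin] with ω hω
        exact hdom (ρ m) ω (hρ0 m ω) (ENNReal.toReal_mono hω.ne (min_le_left _ _))
      · filter_upwards [hρt, hXρ] with ω h1 h2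
        exact (s5_tend (fun s ω => f (X s ω)) hFm Cf hFb ω _ _ h1).add
          ((hgc.tendsto _).comp h2)
    have hlow : ∀ m : ℕ, 1 ≤ m → w₀ - 2 * (1 / (m:ℝ)) ≤
        ∫ ω, (A (ρ m) ω + g (X (ρ m ω) ω)) ∂P := by
      intro m hm
      have hZρ := hint _ (hρst m) (hρ0 m) (hρb m)
      have h1 := hcmp (ρ m) (σm m) (hρst m) (hσmst m) (hρ0 m) (hρσ m) (hσmb m) hZρ
      have h2 := hval m hm
      have hgσ := (hAint _ (hσmm m) (hσm0 m) (hσint m)).add (hgint _ (hσmm m))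
      have h3 : ∫ ω, (A (σm m) ω + g (X (σm m ω) ω)) ∂P ≤
          ∫ ω, (A (σm m) ω + w (X (σm m ω) ω)) ∂P :=
        integral_mono hgσ (hint _ (hσmst m) (hσm0 m) (hσmb m))
          fun ω => by simpa using hgw (X (σm m ω) ω)
      have hgρ : Integrable (fun ω => A (ρ m) ω + g (X (ρ m ω) ω)) P :=
        (hAint _ (hρm m) (hρ0 m) (hρi m)).add (hgint _ (hρm m))
      have h4 : ∫ ω, (A (ρ m) ω + w (X (ρ m ω) ω)) ∂P ≤
          ∫ ω, ((A (ρ m) ω + g (X (ρ m ω) ω)) + (w (X (σm m ω) ω) - g (X (σm m ω) ω))) ∂P := by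
        refine integral_mono hZρ (hgρ.add (hgap_int m)) fun ω => ?_
        rcases le_total (τ ω) (ENNReal.ofReal (σm m ω)) with hc | hc
        · have hfin : τ ω < ⊤ := hc.trans_lt ENNReal.ofReal_lt_top
          have e : ρ m ω = (τ ω).toReal := by simp only [hρ, min_eq_left hc]
          have hatt := s5_hit_attained X hrc g w hgc hwlsc ω hfin
          have := hgw (X (σm m ω) ω)
          simp only [e]
          rw [← hτ] at hatt
          linarith
        · have e : ρ m ω = σm m ω := by
            simp only [hρ, min_eq_right hc, ENNReal.toReal_ofReal (hσm0 m ω)]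
          simp only [e]
          linarith
      rw [integral_add hgρ (hgap_int m)] at h4
      have h5 := hgap m hm
      linarith
    have hl2 : Tendsto (fun m : ℕ => w₀ - 2 * (1 / (m:ℝ))) atTop (𝓝 w₀) := by
      have := (tendsto_const_nhds (x := w₀)).sub
        ((tendsto_one_div_atTop_nhds_zero_nat (𝕜 := ℝ)).const_mul 2)
      simpa using this
    refine le_of_tendsto_of_tendsto hl2 hlim ?_
    filter_upwards [eventually_ge_atTop 1] with m hm using hlow m hm
end

section
/- Let E be a locally compact metric space, μ a Borel probability measure on E, f : E → ℝ bounded and continuous, and (κ_s)_{s≥0} a family of Markov kernels on E such that: for each x ∈ E the map s ↦ ∫ f d(κ_s x) is measurable; for each s ≥ 0 the map x ↦ ∫ f d(κ_s x) is continuous; and there exist a function K : E → (0,∞) bounded on compact sets and a Lebesgue-integrable h : [0,∞) → [0,∞) such that |κ_s x (A) − μ(A)| ≤ K(x) h(s) for every Borel set A ⊆ E, every x ∈ E and every s ≥ 0. Then for every x ∈ E the function s ↦ ∫ f d(κ_s x) − ∫ f dμ is Lebesgue integrable on [0,∞), and q(x) := ∫₀^∞ (∫ f d(κ_s x) − ∫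 f dμ) ds defines a finite-valued continuous function on E. -/
open MeasureTheory Filter Set
open scoped ENNReal Topology

theorem aux_tv {E : Type*} [TopologicalSpace E]
    [MeasurableSpace E] [BorelSpace E]
    (μ ν : Measure E) [IsProbabilityMeasure μ] [IsProbabilityMeasure ν]
    (f : E → ℝ) (hfc : Continuous f) (Cf : ℝ) (hfb : ∀ x, |f x| ≤ Cf) (hC : 0 ≤ Cf) (δ : ℝ)
    (hd : ∀ A : Set E, MeasurableSet A → |(ν A).toReal - (μ A).toReal| ≤ δ) :
    |(∫ y, f y ∂ν) - ∫ y, f y ∂μ| ≤ δ * (2 * Cf) := by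
  have hint : ∀ (ρ : Measure E) [IsProbabilityMeasure ρ], Integrable f ρ := by
    intro ρ _
    exact Integrable.of_bound hfc.measurable.aestronglyMeasurable Cf
      (Eventually.of_forall fun x => by simpa using hfb x)
  have key : ∀ (ρ : Measure E) [IsProbabilityMeasure ρ],
      (∫ y, f y ∂ρ) + Cf = ∫ t in Ioc 0 (2 * Cf), ρ.real {a | t ≤ f a + Cf} := by
    intro ρ _
    have hi : Integrable (fun y => f y + Cf) ρ := (hint ρ).add (integrable_const _)
    have := hi.integral_eq_integral_Ioc_meas_le (M := 2 * Cf)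
      (Eventually.of_forall fun x => by
        have := (abs_le.1 (hfb x)).1
        show (0:ℝ) ≤ f x + Cf
        linarith)
      (Eventually.of_forall fun x => by
        have := (abs_le.1 (hfb x)).2
        show f x + Cf ≤ 2 * Cf
        linarith)
    rw [← this, integral_add (hint ρ) (integrable_const _)]
    simp
  have hm : ∀ (ρ : Measure E) [IsProbabilityMeasure ρ],
      IntegrableOn (fun t : ℝ => ρ.real {a | t ≤ f a + Cf}) (Ioc 0 (2 * Cf)) volume := by
    intro ρ _
    have ha : Antitone (fun t : ℝ => ρ.real {a | t ≤ f a + Cf}) := by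
      intro s t hst
      exact measureReal_mono (fun a (ha : t ≤ f a + Cf) => hst.trans ha)
    exact Integrable.of_bound ha.measurable.aestronglyMeasurable 1
      (Eventually.of_forall fun x => by
        rw [Real.norm_of_nonneg measureReal_nonneg]; exact measureReal_le_one)
  have e : (∫ y, f y ∂ν) - ∫ y, f y ∂μ
      = ∫ t in Ioc 0 (2 * Cf), (ν.real {a | t ≤ f a + Cf} - μ.real {a | t ≤ f a + Cf}) := by
    rw [integral_sub (hm ν) (hm μ), ← key ν, ← key μ]; ring
  rw [e, ← Real.norm_eq_abs]
  have := norm_setIntegral_le_of_norm_le_const (μ := (volume : Measure ℝ)) (s := Ioc 0 (2 * Cf))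
    (f := fun t => ν.real {a | t ≤ f a + Cf} - μ.real {a | t ≤ f a + Cf}) (C := δ)
    measure_Ioc_lt_top (fun t _ => hd _ (measurableSet_le measurable_const
      (hfc.measurable.add measurable_const)))
  refine this.trans (le_of_eq ?_)
  rw [Real.volume_real_Ioc_of_le (by linarith)]
  ring

/-- under an integrable total-variation-type speed of convergence of the
transition kernels `κ_s x` to the invariant measure `μ`, the zero-potential
`q(x) = ∫₀^∞ (∫ f d(κ_s x) − ∫ f dμ) ds` is well defined (the integrand is Lebesgue
integrable on `[0,∞)`) and continuous. -/
theorem stmt7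
    {E : Type*} [MetricSpace E] [LocallyCompactSpace E]
    [MeasurableSpace E] [BorelSpace E]
    (μ : Measure E) [IsProbabilityMeasure μ]
    (f : E → ℝ) (hfc : Continuous f) (Cf : ℝ) (hfb : ∀ x, |f x| ≤ Cf)
    (κ : ℝ → E → Measure E) (hκp : ∀ s x, IsProbabilityMeasure (κ s x))
    (hκmeas : ∀ s : ℝ, ∀ A : Set E, MeasurableSet A → Measurable fun x => κ s x A)
    (hmeas_s : ∀ x, Measurable fun s : ℝ => ∫ y, f y ∂(κ s x))
    (hcont_x : ∀ s : ℝ, Continuous fun x => ∫ y, f y ∂(κ s x))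
    (K : E → ℝ) (hKpos : ∀ x, 0 < K x)
    (hKb : ∀ C : Set E, IsCompact C → ∃ M : ℝ, ∀ x ∈ C, K x ≤ M)
    (h : ℝ → ℝ) (hh0 : ∀ s, 0 ≤ h s)
    (hhint : IntegrableOn h (Ici (0:ℝ)) volume)
    (hTV : ∀ s : ℝ, 0 ≤ s → ∀ x : E, ∀ A : Set E, MeasurableSet A →
      |(κ s x A).toReal - (μ A).toReal| ≤ K x * h s) :
    (∀ x : E, IntegrableOn
        (fun s : ℝ => (∫ y, f y ∂(κ s x)) - ∫ y, f y ∂μ) (Ici (0:ℝ)) volume) ∧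
    Continuous fun x : E =>
      ∫ s in Ici (0:ℝ), ((∫ y, f y ∂(κ s x)) - ∫ y, f y ∂μ) := by
  have hne : Nonempty E := nonempty_of_isProbabilityMeasure μ
  have hC : 0 ≤ Cf := (abs_nonneg _).trans (hfb hne.some)
  have hb : ∀ s : ℝ, 0 ≤ s → ∀ x : E,
      |(∫ y, f y ∂(κ s x)) - ∫ y, f y ∂μ| ≤ K x * h s * (2 * Cf) := by
    intro s hs x
    have := hκp s x
    exact aux_tv μ (κ s x) f hfc Cf hfb hC _ (hTV s hs x)
  have hms : ∀ x, AEStronglyMeasurable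
      (fun s : ℝ => (∫ y, f y ∂(κ s x)) - ∫ y, f y ∂μ) (volume.restrict (Ici (0:ℝ))) :=
    fun x => ((hmeas_s x).sub measurable_const).aestronglyMeasurable
  have hi : ∀ M : ℝ, Integrable (fun s => M * h s * (2 * Cf)) (volume.restrict (Ici (0:ℝ))) :=
    fun M => (hhint.const_mul M).mul_const _
  refine ⟨fun x => ?_, ?_⟩
  · refine Integrable.mono' (hi (K x)) (hms x) ?_
    filter_upwards [ae_restrict_mem measurableSet_Ici] with s hs
    exact hb s hs x
  · rw [continuous_iff_continuousAt]
    intro x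
    obtain ⟨C, hCc, hCx⟩ := exists_compact_mem_nhds x
    obtain ⟨M, hM⟩ := hKb C hCc
    refine continuousAt_of_dominated (bound := fun s => M * h s * (2 * Cf))
      (Eventually.of_forall hms) ?_ (hi M) ?_
    · filter_upwards [hCx] with z hz
      filter_upwards [ae_restrict_mem measurableSet_Ici] with s hs
      refine (hb s hs z).trans ?_
      have := hM z hz
      have := hh0 s
      gcongr
    · exact Eventually.of_forall fun s => ((hcont_x s).sub continuous_const).continuousAt
end

section
/- Assume c ∈ ℝ and that the following large-deviations-type bound holds: for all δ > 0 and ε > 0 there exist N ∈ ℕ and p > 0 such that for every natural number n ≥ N, P(|(nδ)^{-1} ∫₀^{nδ} f(X_s) ds − c| > ε) ≤ e^{−p n δ}. Then for every ε > 0 there exist S > 0, C > 0 and ρ > 0 such that for all t ≥ S: P(sup_{s ≥ t} |s^{-1} ∫₀^s f(X_u) du − c| > ε) ≤ C e^{−ρ t}. -/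
open MeasureTheory Filter Set
open scoped ENNReal Topology

/-- an exponential large-deviations bound for the time averages
`(nδ)⁻¹ ∫₀^{nδ} f(X_s) ds` along arithmetic sequences upgrades to an exponential bound
for the running supremum `sup_{s ≥ t} |s⁻¹ ∫₀^s f(X_u) du − c|`. -/
theorem stmt8
    {Ω : Type*} [MeasurableSpace Ω] (P : Measure Ω) [IsProbabilityMeasure P]
    {E : Type*} [MetricSpace E] [MeasurableSpace E] [BorelSpace E]
    (X : ℝ → Ω → E) (hX : Measurable fun p : ℝ × Ω => X p.1 p.2)
    (f : E → ℝ) (hf : Measurable f) (Cf : ℝ) (hfb : ∀ x, |f x| ≤ Cf)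
    (c : ℝ)
    (hLD : ∀ δ : ℝ, 0 < δ → ∀ ε : ℝ, 0 < ε → ∃ N : ℕ, ∃ p : ℝ, 0 < p ∧
      ∀ n : ℕ, N ≤ n →
        P {ω | ε < |(↑n * δ)⁻¹ * (∫ s in (0:ℝ)..(↑n * δ), f (X s ω)) - c|}
          ≤ ENNReal.ofReal (Real.exp (-p * ↑n * δ))) :
    ∀ ε : ℝ, 0 < ε → ∃ S : ℝ, 0 < S ∧ ∃ C : ℝ, 0 < C ∧ ∃ ρ : ℝ, 0 < ρ ∧
      ∀ t : ℝ, S ≤ t →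
        P {ω | ∃ s : ℝ, t ≤ s ∧ ε < |s⁻¹ * (∫ u in (0:ℝ)..s, f (X u ω)) - c|}
          ≤ ENNReal.ofReal (C * Real.exp (-ρ * t)) := by
  intro ε hε
  obtain ⟨N, p, hp, hN⟩ := hLD 1 one_pos (ε / 2) (half_pos hε)
  have hr1 : Real.exp (-p) < 1 := by
    rw [Real.exp_lt_one_iff]; linarith
  have hr0 := Real.exp_pos (-p)
  have hd : 0 < (1 - Real.exp (-p))⁻¹ := inv_pos.mpr (by linarith)
  refine ⟨max ((N : ℝ) + 1) (2 * (Cf + |c|) / ε), lt_max_of_lt_left (by positivity),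
    Real.exp p * (1 - Real.exp (-p))⁻¹, mul_pos (Real.exp_pos p) hd, p, hp, ?_⟩
  intro t ht
  have ht1 : (N : ℝ) + 1 ≤ t := (le_max_left _ _).trans ht
  have ht2 : 2 * (Cf + |c|) / ε ≤ t := (le_max_right _ _).trans ht
  have hN0 : (0 : ℝ) ≤ N := Nat.cast_nonneg N
  have ht0 : 0 < t := by linarith
  have hint : ∀ ω a b, IntervalIntegrable (fun u => f (X u ω)) volume a b := by
    intro ω a b
    have hm : Measurable fun u => f (X u ω) := hf.comp (hX.comp measurable_prodMk_right)
    refine (intervalIntegrable_const (c := Cf)).mono_fun hm.aestronglyMeasurable ?_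
    refine Eventually.of_forall fun u => ?_
    simp only [Real.norm_eq_abs]
    exact (hfb _).trans (le_abs_self _)
  have hsub : {ω | ∃ s : ℝ, t ≤ s ∧ ε < |s⁻¹ * (∫ u in (0:ℝ)..s, f (X u ω)) - c|} ⊆
      ⋃ k : ℕ, {ω | ε / 2 < |(((⌊t⌋₊ + k : ℕ) : ℝ) * 1)⁻¹ *
        (∫ s in (0:ℝ)..(((⌊t⌋₊ + k : ℕ) : ℝ) * 1), f (X s ω)) - c|} := by
    rintro ω ⟨s, hts, hs⟩
    have hs0 : 0 < s := by linarith
    have hfl : ⌊t⌋₊ ≤ ⌊s⌋₊ := Nat.floor_mono hts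
    rw [mem_iUnion]
    refine ⟨⌊s⌋₊ - ⌊t⌋₊, ?_⟩
    rw [Nat.add_sub_cancel' hfl, mem_setOf_eq, mul_one]
    by_contra hcon
    push Not at hcon
    have hn1 : (⌊s⌋₊ : ℝ) ≤ s := Nat.floor_le hs0.le
    have hn2 : s < ⌊s⌋₊ + 1 := Nat.lt_floor_add_one s
    generalize (⌊s⌋₊ : ℝ) = n at *
    have hn0 : 0 < n := by linarith
    have hadd := intervalIntegral.integral_add_adjacent_intervals (hint ω 0 n) (hint ω n s)
    have hb : ‖∫ u in n..s, f (X u ω)‖ ≤ Cf * |s - n| :=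
      intervalIntegral.norm_integral_le_of_norm_le_const fun u _ => hfb _
    rw [Real.norm_eq_abs, abs_of_nonneg (by linarith : 0 ≤ s - n)] at hb
    generalize (∫ u in (0:ℝ)..s, f (X u ω)) = I at *
    generalize (∫ u in n..s, f (X u ω)) = K at *
    generalize (∫ u in (0:ℝ)..n, f (X u ω)) = J at *
    have e1 : s⁻¹ * I - c = (I - s * c) / s := by field_simp
    have e2 : n⁻¹ * J - c = (J - n * c) / n := by field_simp
    rw [e1, abs_div, abs_of_pos hs0, lt_div_iff₀ hs0] at hs
    rw [e2, abs_div, abs_of_pos hn0, div_le_iff₀ hn0] at hcon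
    have hCf : 0 ≤ Cf := (abs_nonneg _).trans (hfb (X 0 ω))
    have e3 : I - s * c = K + (J - n * c) + (-((s - n) * c)) := by rw [← hadd]; ring
    have h4 : |I - s * c| ≤ |K| + |J - n * c| + (s - n) * |c| := by
      rw [e3]
      refine (abs_add_three _ _ _).trans ?_
      rw [abs_neg, abs_mul, abs_of_nonneg (by linarith : 0 ≤ s - n)]
    have h5 : (s - n) * |c| ≤ |c| := mul_le_of_le_one_left (abs_nonneg _) (by linarith)
    have h6 : Cf * (s - n) ≤ Cf := mul_le_of_le_one_right hCf (by linarith)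
    have h7 : 2 * (Cf + |c|) ≤ s * ε := (div_le_iff₀ hε).mp (ht2.trans hts)
    have h8 : ε / 2 * n ≤ ε / 2 * s := by gcongr
    linarith
  have hNt : N ≤ ⌊t⌋₊ := Nat.le_floor (by linarith)
  have hfl2 : t < ⌊t⌋₊ + 1 := Nat.lt_floor_add_one t
  have hterm : ∀ k : ℕ, Real.exp (-p * ((⌊t⌋₊ + k : ℕ) : ℝ) * 1) =
      Real.exp (-p * ⌊t⌋₊) * Real.exp (-p) ^ k := by
    intro k
    rw [← Real.exp_nat_mul, ← Real.exp_add]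
    congr 1
    push_cast
    ring
  have hsum := (hasSum_geometric_of_lt_one hr0.le hr1).mul_left (Real.exp (-p * ⌊t⌋₊))
  refine (measure_mono hsub).trans ((measure_iUnion_le _).trans ?_)
  refine (ENNReal.tsum_le_tsum fun k => hN _ (hNt.trans (Nat.le_add_right _ k))).trans ?_
  simp only [hterm]
  rw [← ENNReal.ofReal_tsum_of_nonneg (fun k => by positivity) hsum.summable, hsum.tsum_eq]
  apply ENNReal.ofReal_le_ofReal
  have h9 : Real.exp (-p * ⌊t⌋₊) ≤ Real.exp p * Real.exp (-p * t) := by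
    rw [← Real.exp_add]
    apply Real.exp_le_exp.mpr
    nlinarith
  calc _ ≤ Real.exp p * Real.exp (-p * t) * (1 - Real.exp (-p))⁻¹ := by gcongr
    _ = _ := by ring
end

section
/- Assume c < 0 and that the following large-deviations-type bound holds: for all δ > 0 and ε > 0 there exist N ∈ ℕ and p > 0 such that for every natural number n ≥ N, P(|(nδ)^{-1} ∫₀^{nδ} f(X_s) ds − c| > ε) ≤ e^{−p n δ}. Then for every ε with 0 < ε < −c there exists a finite constant C̄ such that E[∫₀^{τ∧T} (f(X_s) − (c + ε)) ds] ≤ C̄ for every stopping time τ and every T ≥ 0. In particular there exists d < 0 (namely d = c + ε) such that sup_{τ, T} E[∫₀^{τ∧T} (f(X_s) − d) ds] < ∞, i.e. assumption (B1) holds. -/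
open MeasureTheory Filter Set
open scoped ENNReal Topology

theorem aux_ii
    {Ω : Type*} {m0 : MeasurableSpace Ω}
    (𝓕 : Filtration ℝ m0)
    {E : Type*} [MetricSpace E] [MeasurableSpace E] [BorelSpace E]
    (X : ℝ → Ω → E) (hX : ProgMeasurable 𝓕 X)
    (f : E → ℝ) (hf : Measurable f) (Cf : ℝ) (hfb : ∀ x, |f x| ≤ Cf) (ω : Ω) (a b : ℝ) :
    IntervalIntegrable (fun s => f (X s ω)) volume a b := by
  have h1 := (hX (max a b)).measurable
  have h2 : Measurable (fun s : ℝ => f (X (min s (max a b)) ω)) := by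
    refine hf.comp ?_
    have h3 : Measurable (fun s : ℝ => ((⟨min s (max a b), Set.mem_Iic.2 (min_le_right _ _)⟩ : Set.Iic (max a b)))) :=
      Measurable.subtype_mk (by fun_prop)
    have h4 : Measurable[_, @Prod.instMeasurableSpace _ _ _ (𝓕 (max a b))]
        (fun s : ℝ => ((⟨min s (max a b), Set.mem_Iic.2 (min_le_right _ _)⟩ : Set.Iic (max a b)), ω)) :=
      Measurable.prodMk h3 measurable_const
    exact h1.comp h4
  have h5 : IntervalIntegrable (fun s : ℝ => f (X (min s (max a b)) ω)) volume a b := by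
    refine (intervalIntegrable_const (c := Cf)).mono_fun h2.aestronglyMeasurable ?_
    refine Filter.Eventually.of_forall fun s => ?_
    simp only [Real.norm_eq_abs]
    exact (hfb _).trans (le_abs_self _)
  refine h5.congr ?_
  intro s hs
  have : s ≤ max a b := hs.2
  simp [min_eq_left this]

theorem aux_path (u : ℝ → ℝ) (Cf c ε : ℝ) (hi : ∀ a b, IntervalIntegrable u volume a b)
    (hb : ∀ s, |u s| ≤ Cf) (t : ℝ) (ht : 0 ≤ t) :
    ((∫ s in (0:ℝ)..t, (u s - (c + ε))) ≤ (Cf + |c + ε|)) ∨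
    (ε < |((⌊t⌋₊ : ℝ) * 1)⁻¹ * (∫ s in (0:ℝ)..((⌊t⌋₊ : ℝ) * 1), u s) - c| ∧
      (∫ s in (0:ℝ)..t, (u s - (c + ε))) ≤ (Cf + |c + ε|) + (Cf + |c + ε|) * ⌊t⌋₊) := by
  have hK : 0 ≤ Cf + |c + ε| := by
    have := (abs_nonneg _).trans (hb 0)
    positivity
  have hi' : ∀ a b, IntervalIntegrable (fun s => u s - (c + ε)) volume a b :=
    fun a b => (hi a b).sub intervalIntegrable_const
  have hbd : ∀ s, ‖u s - (c + ε)‖ ≤ Cf + |c + ε| := fun s =>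
    (norm_sub_le _ _).trans (add_le_add (hb s) le_rfl)
  have key : ∀ a b, a ≤ b → (∫ s in a..b, (u s - (c + ε))) ≤ (Cf + |c + ε|) * (b - a) := by
    intro a b hab
    have := intervalIntegral.norm_integral_le_of_norm_le_const (a := a) (b := b)
      (f := fun s => u s - (c + ε)) (C := Cf + |c + ε|) (fun s _ => hbd s)
    rw [abs_of_nonneg (sub_nonneg.2 hab)] at this
    exact (le_abs_self _).trans this
  set n := ⌊t⌋₊ with hn
  have hnt : (n : ℝ) ≤ t := Nat.floor_le ht
  have htn : t < n + 1 := Nat.lt_floor_add_one t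
  rw [← intervalIntegral.integral_add_adjacent_intervals (hi' 0 n) (hi' n t), mul_one]
  have k2 : (∫ s in (n:ℝ)..t, (u s - (c + ε))) ≤ Cf + |c + ε| :=
    (key n t hnt).trans (by nlinarith)
  have k1 := key 0 n (Nat.cast_nonneg n)
  rw [sub_zero] at k1
  by_cases h : ε < |(n : ℝ)⁻¹ * (∫ s in (0:ℝ)..(n : ℝ), u s) - c|
  · right
    exact ⟨h, by linarith⟩
  · left
    have : (∫ s in (0:ℝ)..n, (u s - (c + ε))) ≤ 0 := by
      rcases Nat.eq_zero_or_pos n with h0 | h0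
      · simp [h0]
      · have hp : (0:ℝ) < n := by exact_mod_cast h0
        rw [intervalIntegral.integral_sub (hi _ _) intervalIntegrable_const,
          intervalIntegral.integral_const, sub_zero, smul_eq_mul]
        have h2 := (abs_le.1 (not_lt.1 h)).2
        have h3 : (n : ℝ)⁻¹ * (∫ s in (0:ℝ)..(n : ℝ), u s) ≤ c + ε := by linarith
        have := (inv_mul_le_iff₀ hp).1 h3
        linarith
    linarith

theorem aux_sum (a : ℕ → ℝ≥0∞) (ha : ∀ n, a n ≤ 1) (N : ℕ) (p K : ℝ) (hp : 0 < p) (hK : 0 ≤ K)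
    (h : ∀ n : ℕ, N ≤ n → a n ≤ ENNReal.ofReal (Real.exp (-p * ↑n * 1))) :
    ∑' n : ℕ, ENNReal.ofReal (K * n) * a n ≠ ∞ := by
  have s1 : Summable (fun n : ℕ => K * ((n:ℝ) ^ 1 * Real.exp (-p * n))) :=
    (Real.summable_pow_mul_exp_neg_nat_mul 1 hp).mul_left K
  have s2 : Summable (fun n : ℕ => if n < N then K * (n:ℝ) else 0) := by
    refine summable_of_ne_finset_zero (s := Finset.range N) ?_
    intro b hb
    simp at hb
    simp [hb]
  refine ne_top_of_le_ne_top (s1.add s2).tsum_ofReal_ne_top (ENNReal.tsum_le_tsum fun n => ?_)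
  by_cases hn : n < N
  · calc _ ≤ ENNReal.ofReal (K * n) * 1 := by gcongr; exact ha n
      _ ≤ _ := by
        rw [mul_one]
        apply ENNReal.ofReal_le_ofReal
        rw [if_pos hn]
        have : 0 ≤ K * ((n:ℝ) ^ 1 * Real.exp (-p * n)) := by positivity
        linarith
  · calc _ ≤ ENNReal.ofReal (K * n) * ENNReal.ofReal (Real.exp (-p * ↑n * 1)) := by
          gcongr; exact h n (not_lt.1 hn)
      _ ≤ _ := by
        rw [← ENNReal.ofReal_mul (by positivity)]
        apply ENNReal.ofReal_le_ofReal
        rw [if_neg hn]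
        simp [mul_assoc]

/-- the large-deviations-type bound (L) together with `c = μ(f) < 0` implies
assumption (B1): for every `0 < ε < −c` there is a finite constant `Cbar` with
`E[∫₀^{τ∧T} (f(X_s) − (c+ε)) ds] ≤ Cbar` for all stopping times `τ` and all `T ≥ 0`. -/
theorem stmt9
    {Ω : Type*} {m0 : MeasurableSpace Ω} (P : Measure Ω) [IsProbabilityMeasure P]
    (𝓕 : Filtration ℝ m0)
    {E : Type*} [MetricSpace E] [MeasurableSpace E] [BorelSpace E]
    (X : ℝ → Ω → E) (hX : ProgMeasurable 𝓕 X)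
    (f : E → ℝ) (hf : Measurable f) (Cf : ℝ) (hfb : ∀ x, |f x| ≤ Cf)
    (c : ℝ) (hc : c < 0)
    (hLD : ∀ δ : ℝ, 0 < δ → ∀ ε : ℝ, 0 < ε → ∃ N : ℕ, ∃ p : ℝ, 0 < p ∧
      ∀ n : ℕ, N ≤ n →
        P {ω | ε < |(↑n * δ)⁻¹ * (∫ s in (0:ℝ)..(↑n * δ), f (X s ω)) - c|}
          ≤ ENNReal.ofReal (Real.exp (-p * ↑n * δ))) :
    (∀ ε : ℝ, 0 < ε → ε < -c → ∃ Cbar : ℝ,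
      ∀ τ : Ω → ℝ, IsStoppingTime 𝓕 (fun ω => (τ ω : WithTop ℝ)) → (∀ ω, 0 ≤ τ ω) → ∀ T : ℝ, 0 ≤ T →
        ∫ ω, (∫ s in (0:ℝ)..(min (τ ω) T), (f (X s ω) - (c + ε))) ∂P ≤ Cbar) ∧
    (∃ d : ℝ, d < 0 ∧ ∃ Cbar : ℝ,
      ∀ τ : Ω → ℝ, IsStoppingTime 𝓕 (fun ω => (τ ω : WithTop ℝ)) → (∀ ω, 0 ≤ τ ω) → ∀ T : ℝ, 0 ≤ T →
        ∫ ω, (∫ s in (0:ℝ)..(min (τ ω) T), (f (X s ω) - d)) ∂P ≤ Cbar) := by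
  have main : ∀ ε : ℝ, 0 < ε → ∃ Cbar : ℝ,
      ∀ τ : Ω → ℝ, (∀ ω, 0 ≤ τ ω) → ∀ T : ℝ, 0 ≤ T →
        ∫ ω, (∫ s in (0:ℝ)..(min (τ ω) T), (f (X s ω) - (c + ε))) ∂P ≤ Cbar := by
    intro ε hε
    obtain ⟨N, p, hp, hN⟩ := hLD 1 one_pos ε hε
    let A : ℕ → Set Ω := fun n =>
      {ω | ε < |(↑n * (1:ℝ))⁻¹ * (∫ s in (0:ℝ)..(↑n * (1:ℝ)), f (X s ω)) - c|}
    obtain ⟨ω0⟩ : Nonempty Ω := P.nonempty_of_neZero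
    set K := Cf + |c + ε| with hKdef
    have hK : 0 ≤ K := by
      have := (abs_nonneg _).trans (hfb (X 0 ω0))
      positivity
    let G : Ω → ℝ≥0∞ := fun ω => ENNReal.ofReal K +
      ∑' n : ℕ, (toMeasurable P (A n)).indicator (fun _ => ENNReal.ofReal (K * n)) ω
    have hG : ∫⁻ ω, G ω ∂P ≠ ∞ := by
      have hm : ∀ n, MeasurableSet (toMeasurable P (A n)) := fun n => measurableSet_toMeasurable _ _
      rw [lintegral_add_left measurable_const,
        lintegral_tsum (fun n => (measurable_const.indicator (hm n)).aemeasurable)]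
      simp only [lintegral_indicator_const (hm _), measure_toMeasurable]
      refine ENNReal.add_ne_top.2 ⟨by simp, ?_⟩
      exact aux_sum (fun n => P (A n)) (fun n => prob_le_one) N p K hp hK hN
    refine ⟨(∫⁻ ω, G ω ∂P).toReal, fun τ hτ T hT => ?_⟩
    by_cases hY : Integrable (fun ω => ∫ s in (0:ℝ)..(min (τ ω) T), (f (X s ω) - (c + ε))) P
    · rw [integral_eq_lintegral_pos_part_sub_lintegral_neg_part hY]
      refine (sub_le_self _ ENNReal.toReal_nonneg).trans ?_
      refine ENNReal.toReal_mono hG (lintegral_mono fun ω => ?_)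
      have ht : 0 ≤ min (τ ω) T := le_min (hτ ω) hT
      rcases aux_path (fun s => f (X s ω)) Cf c ε
        (fun a b => aux_ii 𝓕 X hX f hf Cf hfb ω a b) (fun s => hfb _) _ ht with h | ⟨h1, h2⟩
      · exact (ENNReal.ofReal_le_ofReal h).trans le_self_add
      · refine (ENNReal.ofReal_le_ofReal h2).trans ?_
        rw [ENNReal.ofReal_add hK (by positivity)]
        refine add_le_add le_rfl ?_
        refine le_trans ?_ (ENNReal.le_tsum ⌊min (τ ω) T⌋₊)
        rw [Set.indicator_of_mem (subset_toMeasurable P (A _) h1)]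
    · rw [integral_undef hY]
      exact ENNReal.toReal_nonneg
  refine ⟨fun ε hε _ => ?_, c + (-c/2), by linarith, ?_⟩
  · obtain ⟨C, hC⟩ := main ε hε
    exact ⟨C, fun τ _ h0 T hT => hC τ h0 T hT⟩
  · obtain ⟨C, hC⟩ := main (-c/2) (by linarith)
    exact ⟨C, fun τ _ h0 T hT => hC τ h0 T hT⟩
end

section
/- Assume f ≤ 0 pointwise and let M > 0 and T > 0. Define w := sup{E[∫₀^τ f(X_s) ds + g(X_τ)] : τ a stopping time with E[τ] ≤ M} and w_T := sup{E[∫₀^τ f(X_s) ds + g(X_τ)] : τ a stopping time with τ ≤ T a.s.}. Then w ≤ w_T + 2‖g‖ M / T. In particular, the finite-horizon value functions converge to w as T → ∞, uniformly over any family along which M stays bounded. -/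
open MeasureTheory Filter Set
open scoped ENNReal Topology

lemma aux_X {Ω : Type*} {m0 : MeasurableSpace Ω} (𝓕 : Filtration ℝ m0)
    {E : Type*} [MetricSpace E] [MeasurableSpace E] [BorelSpace E]
    (X : ℝ → Ω → E) (hX : ProgMeasurable 𝓕 X) :
    Measurable (fun p : ℝ × Ω => X p.1 p.2) := by
  refine measurable_of_tendsto_metrizable
    (f := fun (n : ℕ) (p : ℝ × Ω) => X (min p.1 n) p.2) ?_ ?_
  · intro n
    have h1 := (hX (n : ℝ)).measurable
    have h2 : Measurable[_, (inferInstance : MeasurableSpace (Set.Iic (n:ℝ))).prod (𝓕 (n:ℝ))]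
        (fun p : ℝ × Ω => ((⟨min p.1 n, Set.mem_Iic.2 (min_le_right _ _)⟩ : Set.Iic (n:ℝ)), p.2)) := by
      refine Measurable.prodMk ?_ ?_
      · exact (measurable_fst.min measurable_const).subtype_mk
      · exact measurable_snd.mono le_rfl (𝓕.le _)
    exact h1.comp h2
  · rw [tendsto_pi_nhds]
    intro p
    obtain ⟨N, hN⟩ := exists_nat_ge p.1
    refine tendsto_const_nhds.congr' ?_
    filter_upwards [eventually_ge_atTop N] with n hn
    have : (N:ℝ) ≤ n := by exact_mod_cast hn
    rw [min_eq_left (hN.trans this)]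

lemma aux_tau {Ω : Type*} {m0 : MeasurableSpace Ω} (𝓕 : Filtration ℝ m0) (τ : Ω → ℝ)
    (h : IsStoppingTime 𝓕 (fun ω => (τ ω : WithTop ℝ))) : Measurable τ := by
  refine measurable_of_Iic fun c => ?_
  have := 𝓕.le c _ (h c)
  simpa [Set.preimage, WithTop.coe_le_coe] using this

lemma aux_int {Ω : Type*} {m0 : MeasurableSpace Ω} (P : Measure Ω) [IsProbabilityMeasure P]
    {E : Type*} [MeasurableSpace E]
    (X : ℝ → Ω → E) (hX : Measurable (fun p : ℝ × Ω => X p.1 p.2))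
    (f g : E → ℝ) (hf : Measurable f) (hg : Measurable g)
    (Cf Cg : ℝ) (hfb : ∀ x, |f x| ≤ Cf) (hgb : ∀ x, |g x| ≤ Cg)
    (τ : Ω → ℝ) (hτ : Measurable τ) (h0 : ∀ ω, 0 ≤ τ ω) (hi : Integrable τ P) :
    Integrable (fun ω => (∫ s in (0:ℝ)..(τ ω), f (X s ω)) + g (X (τ ω) ω)) P := by
  refine Integrable.add ?_ ?_
  · refine (hi.const_mul Cf).mono' ?_ ?_
    · have e : (fun ω => ∫ s in (0:ℝ)..(τ ω), f (X s ω)) =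
          fun ω => ∫ s, ({p : Ω × ℝ | 0 < p.2 ∧ p.2 ≤ τ p.1}.indicator
            (fun p => f (X p.2 p.1)) (ω, s)) := by
        funext ω
        rw [intervalIntegral.integral_of_le (h0 ω), ← integral_indicator measurableSet_Ioc]
        rfl
      rw [e]
      refine (StronglyMeasurable.integral_prod_right ?_).aestronglyMeasurable
      refine Measurable.stronglyMeasurable ?_
      refine Measurable.indicator (hf.comp (hX.comp measurable_swap)) ?_
      exact (measurableSet_lt measurable_const measurable_snd).inter
        (measurableSet_le measurable_snd (hτ.comp measurable_fst))
    · refine ae_of_all _ fun ω => ?_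
      have := intervalIntegral.norm_integral_le_of_norm_le_const (a := 0) (b := τ ω)
        (f := fun s => f (X s ω)) (C := Cf) (fun s _ => hfb _)
      rwa [sub_zero, abs_of_nonneg (h0 ω)] at this
  · refine (integrable_const Cg).mono' ?_ (ae_of_all _ fun ω => hgb _)
    exact (hg.comp (hX.comp (hτ.prodMk measurable_id))).aestronglyMeasurable

/-- for `f ≤ 0`, the value `w` of the stopping problem over stopping times
with `E[τ] ≤ M` exceeds the finite-horizon value `w_T` by at most `2‖g‖M/T`. -/
theorem stmt10
    {Ω : Type*} {m0 : MeasurableSpace Ω} (P : Measure Ω) [IsProbabilityMeasure P]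
    (𝓕 : Filtration ℝ m0)
    {E : Type*} [MetricSpace E] [MeasurableSpace E] [BorelSpace E]
    (X : ℝ → Ω → E) (hX : ProgMeasurable 𝓕 X)
    (f g : E → ℝ) (hf : Measurable f) (hg : Measurable g)
    (Cf Cg : ℝ) (hfb : ∀ x, |f x| ≤ Cf) (hgb : ∀ x, |g x| ≤ Cg)
    (hfneg : ∀ x, f x ≤ 0)
    (M T : ℝ) (hM : 0 < M) (hT : 0 < T) :
    sSup {v : ℝ | ∃ τ : Ω → ℝ, IsStoppingTime 𝓕 (fun ω => (τ ω : WithTop ℝ)) ∧ (∀ ω, 0 ≤ τ ω) ∧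
        Integrable τ P ∧ (∫ ω, τ ω ∂P) ≤ M ∧
        v = ∫ ω, ((∫ s in (0:ℝ)..(τ ω), f (X s ω)) + g (X (τ ω) ω)) ∂P}
      ≤ sSup {v : ℝ | ∃ τ : Ω → ℝ, IsStoppingTime 𝓕 (fun ω => (τ ω : WithTop ℝ)) ∧ (∀ ω, 0 ≤ τ ω) ∧
          (∀ᵐ ω ∂P, τ ω ≤ T) ∧
          v = ∫ ω, ((∫ s in (0:ℝ)..(τ ω), f (X s ω)) + g (X (τ ω) ω)) ∂P}
        + 2 * Cg * M / T := by
  have hXm := aux_X 𝓕 X hX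
  obtain ⟨ω0⟩ : Nonempty Ω := nonempty_of_isProbabilityMeasure P
  have hCg : 0 ≤ Cg := (abs_nonneg _).trans (hgb (X 0 ω0))
  refine csSup_le ?_ ?_
  · refine ⟨_, fun _ => 0, isStoppingTime_const 𝓕 (0:ℝ), fun _ => le_rfl, integrable_const _, ?_, rfl⟩
    simpa using hM.le
  rintro v ⟨τ, hst, h0, hi, hle, rfl⟩
  have hτ := aux_tau 𝓕 τ hst
  have hbdd : BddAbove {v : ℝ | ∃ τ : Ω → ℝ, IsStoppingTime 𝓕 (fun ω => (τ ω : WithTop ℝ)) ∧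
      (∀ ω, 0 ≤ τ ω) ∧ (∀ᵐ ω ∂P, τ ω ≤ T) ∧
          v = ∫ ω, ((∫ s in (0:ℝ)..(τ ω), f (X s ω)) + g (X (τ ω) ω)) ∂P} := by
    refine ⟨Cg, ?_⟩
    rintro v ⟨τ, hst, h0, -, rfl⟩
    by_cases hI : Integrable (fun ω => (∫ s in (0:ℝ)..(τ ω), f (X s ω)) + g (X (τ ω) ω)) P
    · have : ∫ ω, ((∫ s in (0:ℝ)..(τ ω), f (X s ω)) + g (X (τ ω) ω)) ∂P ≤ ∫ _, Cg ∂P := by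
        refine integral_mono hI (integrable_const _) fun ω => ?_
        have h1 : ∫ s in (0:ℝ)..(τ ω), f (X s ω) ≤ 0 := by
          rw [intervalIntegral.integral_of_le (h0 ω)]
          exact integral_nonpos fun s => hfneg _
        have h2 := (abs_le.1 (hgb (X (τ ω) ω))).2
        show _ + _ ≤ Cg
        linarith
      simpa using this
    · rw [integral_undef hI]; exact hCg
  have hσ0 : ∀ ω, 0 ≤ min (τ ω) T := fun ω => le_min (h0 ω) hT.le
  have hσm : Measurable (fun ω => min (τ ω) T) := hτ.min measurable_const
  have hσi : Integrable (fun ω => min (τ ω) T) P := by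
    refine hi.mono' hσm.aestronglyMeasurable (ae_of_all _ fun ω => ?_)
    rw [Real.norm_of_nonneg (hσ0 ω)]
    exact min_le_left _ _
  have hσs : IsStoppingTime 𝓕 (fun ω => ((min (τ ω) T : ℝ) : WithTop ℝ)) := by
    have := hst.min (isStoppingTime_const 𝓕 T)
    simpa only [WithTop.coe_min] using this
  have hmem := le_csSup hbdd ⟨fun ω => min (τ ω) T, hσs, hσ0,
    ae_of_all _ fun ω => min_le_right _ _, rfl⟩
  have I1 := aux_int P X hXm f g hf hg Cf Cg hfb hgb τ hτ h0 hi
  have I2 := aux_int P X hXm f g hf hg Cf Cg hfb hgb _ hσm hσ0 hσi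
  have key := integral_mono I1 (I2.add (hi.const_mul (2 * Cg / T))) (fun ω => by
    simp only [Pi.add_apply]
    have hnn : 0 ≤ 2 * Cg / T := by positivity
    rcases le_total (τ ω) T with h | h
    · simp only [min_eq_left h]
      have := mul_nonneg hnn (h0 ω)
      linarith
    · simp only [min_eq_right h]
      have hii : ∀ a b, IntervalIntegrable (fun s => f (X s ω)) volume a b := by
        intro a b
        refine (intervalIntegrable_const (c := Cf)).mono_fun' ?_ (ae_of_all _ fun s => hfb _)
        exact (hf.comp (hXm.comp (measurable_id.prodMk measurable_const))).aestronglyMeasurable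
      have h1 := intervalIntegral.integral_add_adjacent_intervals (hii 0 T) (hii T (τ ω))
      have h2 : ∫ s in T..(τ ω), f (X s ω) ≤ 0 := by
        rw [intervalIntegral.integral_of_le h]
        exact integral_nonpos fun s => hfneg _
      have h3 := (abs_le.1 (hgb (X (τ ω) ω))).2
      have h4 := (abs_le.1 (hgb (X T ω))).1
      have h5 : 2 * Cg ≤ 2 * Cg / T * τ ω := by
        calc 2 * Cg = 2 * Cg / T * T := by field_simp
          _ ≤ _ := mul_le_mul_of_nonneg_left h hnn
      linarith)
  rw [integral_add' I2 (hi.const_mul _), integral_const_mul] at key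
  have h6 : 2 * Cg / T * ∫ ω, τ ω ∂P ≤ 2 * Cg * M / T := by
    calc _ ≤ 2 * Cg / T * M := mul_le_mul_of_nonneg_left hle (by positivity)
      _ = _ := by ring
  linarith
end

section
/- Let (E, ρ) be a metric space in which every closed ball is compact, fix x₀ ∈ E, let μ be a Borel probability measure on E, and let f : E → ℝ be continuous and bounded with ∫ f dμ < 0. Then there exists a continuous bounded function f̄ : E → ℝ such that f̄ ≥ f pointwise, ∫ f̄ dμ ≤ (∫ f dμ)/2 < 0, and the set {x ∈ E : f̄(x) ≤ ∫ f̄ dμ} is compact. (One may take f̄ = f ∨ (z_N · f), where z_N(x) = 1 − min(ρ(x, B_N), 1), B_N is the closed ball of radius N around x₀, and N is chosen so large that ∫_{E∖B_N} |f| dμ < −(∫ f dμ)/4.) -/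
open MeasureTheory Filter Set
open scoped ENNReal Topology

/-- if every closed ball of `E` is compact, `μ` is a Borel probability
measure and `f` is bounded continuous with `∫ f dμ < 0`, then there is a bounded
continuous `f̄ ≥ f` with `∫ f̄ dμ ≤ (∫ f dμ)/2 < 0` whose sublevel set
`{x : f̄(x) ≤ ∫ f̄ dμ}` is compact. -/
theorem stmt11
    {E : Type*} [MetricSpace E] [ProperSpace E]
    [MeasurableSpace E] [BorelSpace E]
    (x₀ : E)
    (μ : Measure E) [IsProbabilityMeasure μ]
    (f : E → ℝ) (hfc : Continuous f) (Cf : ℝ) (hfb : ∀ x, |f x| ≤ Cf)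
    (hneg : ∫ x, f x ∂μ < 0) :
    ∃ fbar : E → ℝ, Continuous fbar ∧ (∃ C : ℝ, ∀ x, |fbar x| ≤ C) ∧
      (∀ x, f x ≤ fbar x) ∧
      (∫ x, fbar x ∂μ) ≤ (∫ x, f x ∂μ) / 2 ∧ (∫ x, f x ∂μ) / 2 < 0 ∧
      IsCompact {x : E | fbar x ≤ ∫ y, fbar y ∂μ} := by
  set z : ℕ → E → ℝ := fun N x => max 0 (min 1 ((N : ℝ) + 1 - dist x x₀)) with hz
  set F : ℕ → E → ℝ := fun N x => max (f x) (z N x * f x) with hF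
  have hzc : ∀ N, Continuous (z N) := fun N => by
    simp only [hz]; fun_prop
  have hFc : ∀ N, Continuous (F N) := fun N => hfc.max ((hzc N).mul hfc)
  have hz0 : ∀ N x, 0 ≤ z N x := fun N x => le_max_left _ _
  have hz1 : ∀ N x, z N x ≤ 1 := fun N x => max_le zero_le_one (min_le_left _ _)
  have hFb : ∀ N x, |F N x| ≤ Cf := by
    intro N x
    have h1 : |z N x * f x| ≤ Cf := by
      rw [abs_mul, abs_of_nonneg (hz0 N x)]
      exact (mul_le_of_le_one_left (abs_nonneg _) (hz1 N x)).trans (hfb x)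
    exact abs_max_le_max_abs_abs.trans (max_le (hfb x) h1)
  have hlim : Tendsto (fun N => ∫ x, F N x ∂μ) atTop (𝓝 (∫ x, f x ∂μ)) := by
    refine tendsto_integral_of_dominated_convergence (fun _ => Cf)
      (fun N => (hFc N).aestronglyMeasurable) (integrable_const _)
      (fun N => Eventually.of_forall fun x => by simpa using hFb N x)
      (Eventually.of_forall fun x => ?_)
    refine tendsto_const_nhds.congr' ?_
    obtain ⟨M, hM⟩ := exists_nat_ge (dist x x₀)
    filter_upwards [eventually_ge_atTop M] with N hN
    have h2 : (M : ℝ) ≤ N := by exact_mod_cast hN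
    have h3 : z N x = 1 := by
      simp only [hz]
      rw [min_eq_left (by linarith), max_eq_right zero_le_one]
    simp only [hF, h3, one_mul, max_self]
  obtain ⟨N, hN⟩ := (hlim.eventually (gt_mem_nhds
    (show (∫ x, f x ∂μ) < (∫ x, f x ∂μ) / 2 by linarith))).exists
  refine ⟨F N, hFc N, ⟨Cf, hFb N⟩, fun x => le_max_left _ _, hN.le, by linarith, ?_⟩
  refine (isCompact_closedBall x₀ ((N : ℝ) + 1)).of_isClosed_subset
    (isClosed_le (hFc N) continuous_const) ?_
  intro x hx
  by_contra hc
  have hd : (N : ℝ) + 1 < dist x x₀ := by simpa using hc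
  have h0 : z N x = 0 := by
    simp only [hz]
    exact max_eq_left ((min_le_right _ _).trans (by linarith))
  have h4 : 0 ≤ F N x := by
    have := le_max_right (f x) (z N x * f x)
    rw [h0, zero_mul] at this
    simpa only [hF, h0, zero_mul] using this
  have h5 : F N x ≤ ∫ y, F N y ∂μ := hx
  linarith
end

section
/- Let w, g : E → ℝ be measurable with g ≤ w pointwise, and set Z_t := ∫₀^t e^{−α_s} f(X_s) ds + e^{−α_t} w(X_t). Assume each Z_t is integrable, (Z_t) is adapted and satisfies the optional-sampling supermartingale property. Then for every bounded stopping time σ and every stopping time τ: E[∫₀^σ e^{−α_s} f(X_s) ds + e^{−α_σ} g(X_σ)] ≤ E[∫₀^{τ∧σ} e^{−α_s} f(X_s) ds + 1_{σ<τ} e^{−α_σ} g(X_σ) + 1_{σ≥τ} e^{−α_{τ∧σ}} w(X_{τ∧σ})]. (On {σ ≥ τ} one has τ∧σ = τ, so the last term equals 1_{σ≥τ} e^{−α_τ} w(X_τ).) -/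
open MeasureTheory Filter Set
open scoped ENNReal Topology Classical

namespace BellAux

lemma meas_ii {Ω : Type*} [MeasurableSpace Ω] {k : ℝ → Ω → ℝ}
    (hk : Measurable (Function.uncurry k)) {ρ : Ω → ℝ} (hρ : Measurable ρ) :
    Measurable (fun ω => ∫ s in (0:ℝ)..(ρ ω), k s ω) := by
  have key : ∀ a b : Ω → ℝ, Measurable a → Measurable b →
      Measurable (fun ω => ∫ s in Ioc (a ω) (b ω), k s ω) := by
    intro a b ha hb
    have h1 : ∀ ω, ∫ s in Ioc (a ω) (b ω), k s ω
        = ∫ s, {p : Ω × ℝ | a p.1 < p.2 ∧ p.2 ≤ b p.1}.indicator (fun p => k p.2 p.1) (ω, s) := by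
      intro ω
      rw [← integral_indicator measurableSet_Ioc]
      rfl
    simp_rw [h1]
    refine StronglyMeasurable.measurable (StronglyMeasurable.integral_prod_right' ?_)
    refine Measurable.stronglyMeasurable (Measurable.indicator (hk.comp measurable_swap) ?_)
    exact (measurableSet_lt (ha.comp measurable_fst) measurable_snd).inter
      (measurableSet_le measurable_snd (hb.comp measurable_fst))
  exact (key _ _ measurable_const hρ).sub (key _ _ hρ measurable_const)

lemma fatou {Ω : Type*} {m0 : MeasurableSpace Ω} (P : Measure Ω) [IsProbabilityMeasure P]
    (Y : ℕ → Ω → ℝ) (Z : Ω → ℝ) (C K : ℝ) (hY : ∀ n, Integrable (Y n) P)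
    (hC : ∀ n ω, -C ≤ Y n ω) (hK : ∀ n, ∫ ω, Y n ω ∂P ≤ K)
    (hZ : ∀ ω, Tendsto (fun n => Y n ω) atTop (𝓝 (Z ω))) : Integrable Z P := by
  have hI : ∀ n, Integrable (fun ω => Y n ω + C) P := fun n => (hY n).add (integrable_const C)
  have hb : ∀ n, ∫⁻ ω, ENNReal.ofReal (Y n ω + C) ∂P ≤ ENNReal.ofReal (K + C) := by
    intro n
    rw [← ofReal_integral_eq_lintegral_ofReal (hI n)
      (Eventually.of_forall fun ω => by have := hC n ω; simp; linarith)]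
    apply ENNReal.ofReal_le_ofReal
    rw [integral_add (hY n) (integrable_const C)]
    simpa using hK n
  have hm : AEStronglyMeasurable Z P :=
    aestronglyMeasurable_of_tendsto_ae atTop (fun n => (hY n).1) (Eventually.of_forall hZ)
  have hZC : ∀ ω, 0 ≤ Z ω + C := fun ω => by
    have := ge_of_tendsto' (hZ ω) (fun n => hC n ω); linarith
  have h2 : Integrable (fun ω => Z ω + C) P := by
    refine ⟨hm.add aestronglyMeasurable_const, ?_⟩
    rw [hasFiniteIntegral_iff_ofReal (Eventually.of_forall hZC)]
    calc ∫⁻ ω, ENNReal.ofReal (Z ω + C) ∂P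
        = ∫⁻ ω, liminf (fun n => ENNReal.ofReal (Y n ω + C)) atTop ∂P := by
          refine lintegral_congr fun ω => ?_
          refine (Tendsto.liminf_eq ?_).symm
          exact (ENNReal.continuous_ofReal.tendsto _).comp ((hZ ω).add_const C)
      _ ≤ liminf (fun n => ∫⁻ ω, ENNReal.ofReal (Y n ω + C) ∂P) atTop :=
          lintegral_liminf_le' fun n => (hI n).1.aemeasurable.ennreal_ofReal
      _ ≤ ENNReal.ofReal (K + C) :=
          liminf_le_of_frequently_le' (Eventually.of_forall hb).frequently
      _ < ⊤ := ENNReal.ofReal_lt_top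
  have h3 := h2.sub (integrable_const C)
  refine h3.congr (Eventually.of_forall fun ω => ?_)
  simp

/-- piecewise stopping time -/
lemma pw_stop {Ω : Type*} {m0 : MeasurableSpace Ω} (𝓕 : Filtration ℝ m0) (ρ : Ω → ℝ) (T : ℝ)
    (hρ : IsStoppingTime 𝓕 (fun ω => (ρ ω : WithTop ℝ))) (hT : ∀ ω, ρ ω ≤ T) (A : Set Ω)
    (hA : MeasurableSet[hρ.measurableSpace] A) :
    IsStoppingTime 𝓕 (fun ω => ((if ω ∈ A then ρ ω else T : ℝ) : WithTop ℝ)) := by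
  intro t
  have hA2 := hA.2
  by_cases hTt : T ≤ t
  · convert MeasurableSet.univ
    ext ω
    simp only [mem_ofPred_eq, mem_univ, iff_true, WithTop.coe_le_coe]
    split_ifs
    · exact (hT ω).trans hTt
    · exact hTt
  · convert hA2 t using 1
    ext ω
    simp only [mem_ofPred_eq, mem_inter_iff, WithTop.coe_le_coe]
    by_cases h : ω ∈ A <;> simp [h]
    linarith

lemma core {Ω : Type*} {m0 : MeasurableSpace Ω} (P : Measure Ω) [IsProbabilityMeasure P]
    (𝓕 : Filtration ℝ m0) (Z V : ℝ → Ω → ℝ) 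
    (hZint : ∀ t : ℝ, 0 ≤ t → Integrable (Z t) P)
    (hZsup : ∀ (σ₁ σ₂ : Ω → ℝ) (h1 : IsStoppingTime 𝓕 (fun ω => (σ₁ ω : WithTop ℝ)))
      (_h2 : IsStoppingTime 𝓕 (fun ω => (σ₂ ω : WithTop ℝ))),
      (∀ ω, 0 ≤ σ₁ ω) → (∀ ω, σ₁ ω ≤ σ₂ ω) → (∃ T, ∀ ω, σ₂ ω ≤ T) →
      ∀ᵐ ω ∂P, (P[(fun ω' => Z (σ₂ ω') ω') | h1.measurableSpace]) ω ≤ Z (σ₁ ω) ω)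
    (T C : ℝ) (hT : 0 ≤ T)
    (hV : ∀ (ρ : Ω → ℝ) (h1 : IsStoppingTime 𝓕 (fun ω => (ρ ω : WithTop ℝ))),
      Measurable[h1.measurableSpace] (fun ω => V (ρ ω) ω))
    (hZm : ∀ ρ : Ω → ℝ, Measurable ρ → (∀ ω, 0 ≤ ρ ω) → (∀ ω, ρ ω ≤ T) →
      Measurable (fun ω => Z (ρ ω) ω))
    (hlow : ∀ t ω, 0 ≤ t → t ≤ T → -C ≤ Z t ω)
    (hup : ∀ t ω, 0 ≤ t → t ≤ T → Z t ω ≤ C + |V t ω|)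
    (ρ : Ω → ℝ) (hρ : IsStoppingTime 𝓕 (fun ω => (ρ ω : WithTop ℝ)))
    (h0 : ∀ ω, 0 ≤ ρ ω) (hρT : ∀ ω, ρ ω ≤ T) (hρm : Measurable ρ) :
    Integrable (fun ω => Z (ρ ω) ω) P := by
  let A : ℕ → Set Ω := fun n => {ω | |V (ρ ω) ω| ≤ n}
  have hA : ∀ n, MeasurableSet[hρ.measurableSpace] (A n) := fun n => by
    have h := hV ρ hρ
    have := h (measurableSet_Icc (a := -(n:ℝ)) (b := n))
    convert this using 1
    ext ω
    simp [A, abs_le]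
  have hA0 : ∀ n, MeasurableSet (A n) := fun n => hρ.measurableSpace_le _ (hA n)
  let R : ℕ → Ω → ℝ := fun n ω => if ω ∈ A n then ρ ω else T
  have hR0 : ∀ n ω, 0 ≤ R n ω := fun n ω => by
    simp only [R]; split_ifs; exacts [h0 ω, hT]
  have hRT : ∀ n ω, R n ω ≤ T := fun n ω => by
    simp only [R]; split_ifs; exacts [hρT ω, le_rfl]
  have hRm : ∀ n, Measurable (R n) := fun n => Measurable.ite (hA0 n) hρm measurable_const
  have hint : ∀ n, Integrable (fun ω => Z (R n ω) ω) P := by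
    intro n
    refine Integrable.mono' (g := fun ω => (|C| + n) + |Z T ω|)
      ((integrable_const _).add (hZint T hT).abs) 
      (hZm _ (hRm n) (hR0 n) (hRT n)).aestronglyMeasurable (Eventually.of_forall fun ω => ?_)
    by_cases h : ω ∈ A n
    · have e : R n ω = ρ ω := by simp [R, h]
      have h1 := hlow (ρ ω) ω (h0 ω) (hρT ω)
      have h2 := hup (ρ ω) ω (h0 ω) (hρT ω)
      have h3 : |V (ρ ω) ω| ≤ n := h
      have h4 := abs_nonneg (Z T ω)
      have h5 := le_abs_self C
      have h6 : (0:ℝ) ≤ n := n.cast_nonneg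
      simp only [e]
      rw [Real.norm_eq_abs, abs_le]
      constructor <;> linarith
    · have e : R n ω = T := by simp [R, h]
      simp only [e]
      rw [Real.norm_eq_abs]
      have : (0:ℝ) ≤ |C| + n := by positivity
      linarith
  refine fatou P (fun n ω => Z (R n ω) ω) _ C (∫ ω, Z 0 ω ∂P) hint
    (fun n ω => hlow _ ω (hR0 n ω) (hRT n ω)) ?_ ?_
  · intro n
    have hc : IsStoppingTime 𝓕 (fun _ : Ω => ((0:ℝ) : WithTop ℝ)) := isStoppingTime_const 𝓕 (0:ℝ)
    have h := hZsup (fun _ => 0) (R n) hc (pw_stop 𝓕 ρ T hρ hρT (A n) (hA n)) (fun _ => le_rfl)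
      (hR0 n) ⟨T, hRT n⟩
    rw [← integral_condExp hc.measurableSpace_le]
    exact integral_mono_ae integrable_condExp (hZint 0 le_rfl) h
  · intro ω
    refine tendsto_const_nhds.congr' ?_
    obtain ⟨N, hN⟩ := exists_nat_ge |V (ρ ω) ω|
    filter_upwards [eventually_ge_atTop N] with n hn
    have : ω ∈ A n := hN.trans (by exact_mod_cast hn)
    simp [R, this]

end BellAux

/-- discounted Bellman-type inequality. If
`Z_t = ∫₀^t e^{−α_s} f(X_s) ds + e^{−α_t} w(X_t)` is an integrable adapted process with
the optional-sampling supermartingale property and `g ≤ w`, then for every bounded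
stopping time `σ` and every stopping time `τ`,
`E[∫₀^σ e^{−α_s} f + e^{−α_σ} g(X_σ)]
  ≤ E[∫₀^{τ∧σ} e^{−α_s} f + 1_{σ<τ} e^{−α_σ} g(X_σ) + 1_{σ≥τ} e^{−α_{τ∧σ}} w(X_{τ∧σ})]`. -/
theorem stmt13
    {Ω : Type*} {m0 : MeasurableSpace Ω} (P : Measure Ω) [IsProbabilityMeasure P]
    (𝓕 : Filtration ℝ m0)
    {E : Type*} [MetricSpace E] [MeasurableSpace E] [BorelSpace E]
    (X : ℝ → Ω → E) (hX : ProgMeasurable 𝓕 X)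
    (f g : E → ℝ) (hf : Measurable f) (hg : Measurable g)
    (Cf Cg : ℝ) (hfb : ∀ x, |f x| ≤ Cf) (hgb : ∀ x, |g x| ≤ Cg)
    (r : E → ℝ) (hr : Measurable r) (Cr : ℝ) (hrb : ∀ x, |r x| ≤ Cr)
    (hr0 : ∀ x, 0 ≤ r x)
    (w : E → ℝ) (hw : Measurable w) (hgw : ∀ x, g x ≤ w x)
    (hZint : ∀ t : ℝ, 0 ≤ t →
      Integrable (fun ω =>
        (∫ s in (0:ℝ)..t, Real.exp (-(∫ u in (0:ℝ)..s, r (X u ω))) * f (X s ω))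
          + Real.exp (-(∫ u in (0:ℝ)..t, r (X u ω))) * w (X t ω)) P)
    (hZadp : ∀ t : ℝ, 0 ≤ t →
      StronglyMeasurable[𝓕 t] fun ω =>
        (∫ s in (0:ℝ)..t, Real.exp (-(∫ u in (0:ℝ)..s, r (X u ω))) * f (X s ω))
          + Real.exp (-(∫ u in (0:ℝ)..t, r (X u ω))) * w (X t ω))
    (hZsup : ∀ (σ₁ σ₂ : Ω → ℝ) (h1 : IsStoppingTime 𝓕 (fun ω => (σ₁ ω : WithTop ℝ))) (_h2 : IsStoppingTime 𝓕 (fun ω => (σ₂ ω : WithTop ℝ))),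
      (∀ ω, 0 ≤ σ₁ ω) → (∀ ω, σ₁ ω ≤ σ₂ ω) → (∃ T, ∀ ω, σ₂ ω ≤ T) →
      ∀ᵐ ω ∂P,
        (P[(fun ω' =>
            (∫ s in (0:ℝ)..(σ₂ ω'), Real.exp (-(∫ u in (0:ℝ)..s, r (X u ω'))) * f (X s ω'))
              + Real.exp (-(∫ u in (0:ℝ)..(σ₂ ω'), r (X u ω'))) * w (X (σ₂ ω') ω')) |
            h1.measurableSpace]) ω
          ≤ (∫ s in (0:ℝ)..(σ₁ ω), Real.exp (-(∫ u in (0:ℝ)..s, r (X u ω))) * f (X s ω))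
              + Real.exp (-(∫ u in (0:ℝ)..(σ₁ ω), r (X u ω))) * w (X (σ₁ ω) ω))
    (σ : Ω → ℝ) (hσ : IsStoppingTime 𝓕 (fun ω => (σ ω : WithTop ℝ))) (hσ0 : ∀ ω, 0 ≤ σ ω)
    (hσb : ∃ T, ∀ ω, σ ω ≤ T)
    (τ : Ω → ℝ) (hτ : IsStoppingTime 𝓕 (fun ω => (τ ω : WithTop ℝ))) (hτ0 : ∀ ω, 0 ≤ τ ω) :
    ∫ ω, ((∫ s in (0:ℝ)..(σ ω), Real.exp (-(∫ u in (0:ℝ)..s, r (X u ω))) * f (X s ω))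
        + Real.exp (-(∫ u in (0:ℝ)..(σ ω), r (X u ω))) * g (X (σ ω) ω)) ∂P
      ≤ ∫ ω, ((∫ s in (0:ℝ)..(min (τ ω) (σ ω)),
            Real.exp (-(∫ u in (0:ℝ)..s, r (X u ω))) * f (X s ω))
          + (if σ ω < τ ω then
              Real.exp (-(∫ u in (0:ℝ)..(σ ω), r (X u ω))) * g (X (σ ω) ω)
            else
              Real.exp (-(∫ u in (0:ℝ)..(min (τ ω) (σ ω)), r (X u ω)))
                * w (X (min (τ ω) (σ ω)) ω))) ∂P := by
  obtain ⟨T, hσT⟩ := hσb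
  rcases isEmpty_or_nonempty Ω with hΩ | ⟨⟨ω₀⟩⟩
  · simp [integral_of_isEmpty]
  have hCf : 0 ≤ Cf := (abs_nonneg _).trans (hfb (X 0 ω₀))
  have hT : 0 ≤ T := (hσ0 ω₀).trans (hσT ω₀)
  set D : ℝ → Ω → ℝ := fun t ω => Real.exp (-(∫ u in (0:ℝ)..t, r (X u ω))) with hD
  set I : ℝ → Ω → ℝ := fun t ω => ∫ s in (0:ℝ)..t, D s ω * f (X s ω) with hI
  have hD0 : ∀ t ω, 0 ≤ D t ω := fun t ω => (Real.exp_pos _).le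
  have hD1 : ∀ t ω, 0 ≤ t → D t ω ≤ 1 := fun t ω ht => by
    simp only [hD]
    rw [Real.exp_le_one_iff, neg_nonpos]
    exact intervalIntegral.integral_nonneg ht fun u _ => hr0 _
  have hIb : ∀ t ω, 0 ≤ t → t ≤ T → |I t ω| ≤ Cf * T := fun t ω h0 h1 => by
    have : ‖I t ω‖ ≤ Cf * |t - 0| := by
      apply intervalIntegral.norm_integral_le_of_norm_le_const
      intro s hs
      rw [uIoc_of_le h0] at hs
      rw [norm_mul, Real.norm_eq_abs, Real.norm_eq_abs, abs_of_nonneg (hD0 s ω)]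
      have := mul_le_mul (hD1 s ω hs.1.le) (hfb (X s ω)) (abs_nonneg _) zero_le_one
      simpa using this
    rw [Real.norm_eq_abs, sub_zero, abs_of_nonneg h0] at this
    exact this.trans (mul_le_mul_of_nonneg_left h1 hCf)
  -- measurability
  have hX' : Measurable (fun p : ℝ × Ω => X (min p.1 T) p.2) := by
    have h := (hX T).measurable
    have h2 : Measurable (fun p : Set.Iic T × Ω => X p.1 p.2) :=
      h.mono (sup_le_sup le_rfl (MeasurableSpace.comap_mono (𝓕.le T))) le_rfl
    have h3 : Measurable (fun p : ℝ × Ω =>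
        ((⟨min p.1 T, mem_Iic.2 (min_le_right _ _)⟩ : Set.Iic T), p.2)) :=
      ((measurable_fst.min measurable_const).subtype_mk).prodMk measurable_snd
    exact h2.comp h3
  have hα' : Measurable (fun p : ℝ × Ω => Real.exp (-∫ u in (0:ℝ)..p.1, r (X (min u T) p.2))) := by
    refine Real.measurable_exp.comp (Measurable.neg ?_)
    refine BellAux.meas_ii (k := fun u (p : ℝ × Ω) => r (X (min u T) p.2)) ?_ measurable_fst
    exact hr.comp (hX'.comp (measurable_fst.prodMk (measurable_snd.comp measurable_snd)))
  have hDe : ∀ t ω, 0 ≤ t → t ≤ T →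
      D t ω = Real.exp (-∫ u in (0:ℝ)..t, r (X (min u T) ω)) := fun t ω h0 h1 => by
    simp only [hD]
    congr 2
    refine intervalIntegral.integral_congr fun u hu => ?_
    rw [uIcc_of_le h0] at hu
    simp only [min_eq_left (hu.2.trans h1)]
  have hIe : ∀ t ω, 0 ≤ t → t ≤ T → I t ω = ∫ s in (0:ℝ)..t,
      Real.exp (-∫ u in (0:ℝ)..s, r (X (min u T) ω)) * f (X (min s T) ω) := fun t ω h0 h1 => by
    simp only [hI]
    refine intervalIntegral.integral_congr fun u hu => ?_
    rw [uIcc_of_le h0] at hu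
    simp only [min_eq_left (hu.2.trans h1)]
    rw [hDe u ω hu.1 (hu.2.trans h1)]
  have hXm : ∀ ρ : Ω → ℝ, Measurable ρ → (∀ ω, ρ ω ≤ T) → Measurable (fun ω => X (ρ ω) ω) := by
    intro ρ hρ h1
    have := hX'.comp (hρ.prodMk measurable_id)
    convert this using 2 with ω
    simp [min_eq_left (h1 ω)]
  have hDm : ∀ ρ : Ω → ℝ, Measurable ρ → (∀ ω, 0 ≤ ρ ω) → (∀ ω, ρ ω ≤ T) →
      Measurable (fun ω => D (ρ ω) ω) := by
    intro ρ hρ h0 h1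
    have := hα'.comp (hρ.prodMk measurable_id)
    convert this using 2 with ω
    exact hDe _ _ (h0 ω) (h1 ω)
  have hIm : ∀ ρ : Ω → ℝ, Measurable ρ → (∀ ω, 0 ≤ ρ ω) → (∀ ω, ρ ω ≤ T) →
      Measurable (fun ω => I (ρ ω) ω) := by
    intro ρ hρ h0 h1
    have := BellAux.meas_ii (k := fun s ω =>
      Real.exp (-∫ u in (0:ℝ)..s, r (X (min u T) ω)) * f (X (min s T) ω))
      (hα'.mul (hf.comp hX')) hρ
    convert this using 2 with ω
    exact hIe _ _ (h0 ω) (h1 ω)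
  have hmeas : ∀ ρ : Ω → ℝ, IsStoppingTime 𝓕 (fun ω => (ρ ω : WithTop ℝ)) → Measurable ρ := by
    intro ρ hρ
    refine measurable_of_Iic fun t => ?_
    have := 𝓕.le t _ (hρ t)
    simpa [preimage, Iic] using this
  have hCg : 0 ≤ Cg := (abs_nonneg _).trans (hgb (X 0 ω₀))
  have hDg : ∀ t ω, 0 ≤ t → |D t ω * g (X t ω)| ≤ Cg := fun t ω h0 => by
    rw [abs_mul, abs_of_nonneg (hD0 t ω)]
    have := mul_le_mul (hD1 t ω h0) (hgb (X t ω)) (abs_nonneg _) zero_le_one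
    simpa using this
  set C := Cf * T + Cg with hC
  have hcore := BellAux.core P 𝓕 (fun t ω => I t ω + D t ω * w (X t ω)) (fun t ω => w (X t ω))
    hZint hZsup T C hT ?_ ?_ ?_ ?_
  rotate_left
  · intro ρ h1
    exact hw.comp (measurable_stoppedValue hX h1)
  · intro ρ h1 h2 h3
    exact (hIm ρ h1 h2 h3).add ((hDm ρ h1 h2 h3).mul (hw.comp (hXm ρ h1 h3)))
  · intro t ω h0 h1
    have a1 := (abs_le.1 (hIb t ω h0 h1)).1
    have a2 := (abs_le.1 (hDg t ω h0)).1
    have a3 := mul_le_mul_of_nonneg_left (hgw (X t ω)) (hD0 t ω)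
    simp only [hC]
    linarith
  · intro t ω h0 h1
    have a1 := (abs_le.1 (hIb t ω h0 h1)).2
    have a2 : D t ω * w (X t ω) ≤ |w (X t ω)| :=
      calc D t ω * w (X t ω) ≤ D t ω * |w (X t ω)| :=
            mul_le_mul_of_nonneg_left (le_abs_self _) (hD0 t ω)
        _ ≤ 1 * |w (X t ω)| := mul_le_mul_of_nonneg_right (hD1 t ω h0) (abs_nonneg _)
        _ = _ := one_mul _
    simp only [hC]
    linarith
  set ρ : Ω → ℝ := fun ω => min (τ ω) (σ ω) with hρd
  have hρ : IsStoppingTime 𝓕 (fun ω => (ρ ω : WithTop ℝ)) := hτ.min hσ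
  have hρ0 : ∀ ω, 0 ≤ ρ ω := fun ω => le_min (hτ0 ω) (hσ0 ω)
  have hρσ : ∀ ω, ρ ω ≤ σ ω := fun ω => min_le_right _ _
  have hρT : ∀ ω, ρ ω ≤ T := fun ω => (hρσ ω).trans (hσT ω)
  have mσ := hmeas σ hσ
  have mρ := hmeas ρ hρ
  have iσ := hcore σ hσ hσ0 hσT mσ
  have iρ := hcore ρ hρ hρ0 hρT mρ
  have hle : ∫ ω, (I (σ ω) ω + D (σ ω) ω * w (X (σ ω) ω)) ∂P
      ≤ ∫ ω, (I (ρ ω) ω + D (ρ ω) ω * w (X (ρ ω) ω)) ∂P := by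
    have h := hZsup ρ σ hρ hσ hρ0 hρσ ⟨T, hσT⟩
    rw [← integral_condExp hρ.measurableSpace_le]
    exact integral_mono_ae integrable_condExp iρ h
  have mg : Measurable (fun ω => D (σ ω) ω * g (X (σ ω) ω)) :=
    (hDm σ mσ hσ0 hσT).mul (hg.comp (hXm σ mσ hσT))
  have mL : Measurable (fun ω => I (σ ω) ω + D (σ ω) ω * g (X (σ ω) ω)) :=
    (hIm σ mσ hσ0 hσT).add mg
  have iL : Integrable (fun ω => I (σ ω) ω + D (σ ω) ω * g (X (σ ω) ω)) P := by
    refine Integrable.mono' (integrable_const C) mL.aestronglyMeasurable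
      (Eventually.of_forall fun ω => ?_)
    refine (norm_add_le _ _).trans (add_le_add (hIb _ ω (hσ0 ω) (hσT ω)) (hDg _ ω (hσ0 ω)))
  have sA : MeasurableSet {ω | σ ω < τ ω} := measurableSet_lt mσ (hmeas τ hτ)
  have iR : Integrable (fun ω => I (ρ ω) ω + (if σ ω < τ ω then D (σ ω) ω * g (X (σ ω) ω)
      else D (ρ ω) ω * w (X (ρ ω) ω))) P := by
    have : Integrable ({ω | σ ω < τ ω}.piecewise
        (fun ω => I (σ ω) ω + D (σ ω) ω * g (X (σ ω) ω))
        (fun ω => I (ρ ω) ω + D (ρ ω) ω * w (X (ρ ω) ω))) P :=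
      Integrable.piecewise sA iL.integrableOn iρ.integrableOn
    convert this using 2 with ω
    by_cases h : σ ω < τ ω
    · simp [Set.piecewise, h, hρd, min_eq_right h.le]
    · simp [Set.piecewise, h]
  have hmono := integral_mono (iL.add iρ) (iR.add iσ) (fun ω => by
    simp only [Pi.add_apply]
    by_cases h : σ ω < τ ω
    · have e : ρ ω = σ ω := min_eq_right h.le
      simp only [h, if_true, e]
      exact le_rfl
    · simp only [h, if_false]
      have a3 := mul_le_mul_of_nonneg_left (hgw (X (σ ω) ω)) (hD0 (σ ω) ω)
      linarith)
  have e1 := integral_add iL iρ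
  have e2 := integral_add iR iσ
  simp only [Pi.add_apply] at hmono
  rw [e1, e2] at hmono
  have : ∫ ω, (I (σ ω) ω + D (σ ω) ω * g (X (σ ω) ω)) ∂P ≤
    ∫ ω, (I (ρ ω) ω + (if σ ω < τ ω then D (σ ω) ω * g (X (σ ω) ω)
      else D (ρ ω) ω * w (X (ρ ω) ω))) ∂P := by linarith
  exact this
end

section
/- Let w, g : E → ℝ be measurable with g ≤ w pointwise, set Z_t := ∫₀^t e^{−α_s} f(X_s) ds + e^{−α_t} w(X_t), and assume each Z_t is integrable, (Z_t) is adapted, satisfies the optional-sampling supermartingale property, and Z_0 = w₀ a.s. for a constant w₀ ∈ ℝ. Let ε > 0 and η > 0, let σ be a bounded stopping time with E[∫₀^σ e^{−α_s} f(X_s) ds + e^{−α_σ} g(X_σ)] ≥ w₀ − η, and let τ_ε be a stopping time such that for a.e. ω and every t < τ_ε(ω) one has g(X_t(ω)) < w(X_t(ω)) − ε. Then E[1_{σ < τ_ε} e^{−α_σ}] ≤ η/ε. -/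
open MeasureTheory Filter Set
open scoped ENNReal Topology Classical

namespace S14

/-- discounted integral -/
noncomputable def al {Ω E : Type*} (X : ℝ → Ω → E) (r : E → ℝ) (s : ℝ) (ω : Ω) : ℝ :=
  ∫ u in (0:ℝ)..s, r (X u ω)

noncomputable def ZZ {Ω E : Type*} (X : ℝ → Ω → E) (r f w : E → ℝ) (s : ℝ) (ω : Ω) : ℝ :=
  (∫ s in (0:ℝ)..s, Real.exp (-(∫ u in (0:ℝ)..s, r (X u ω))) * f (X s ω))
          + Real.exp (-(∫ u in (0:ℝ)..s, r (X u ω))) * w (X s ω)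

lemma meas_int {Ω : Type*} [MeasurableSpace Ω] (h : ℝ × Ω → ℝ) (hh : Measurable h) :
    Measurable (fun p : ℝ × Ω => ∫ u in (0:ℝ)..p.1, h (u, p.2)) := by
  simp only [intervalIntegral]
  have hm : Measurable (fun q : (ℝ × Ω) × ℝ => h (q.2, q.1.2)) := by fun_prop
  apply Measurable.sub
  · simp_rw [← integral_indicator (measurableSet_Ioc)]
    apply StronglyMeasurable.measurable
    apply StronglyMeasurable.integral_prod_right (f := fun (p : ℝ × Ω) u => (Ioc 0 p.1).indicator (fun u => h (u, p.2)) u)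
    apply Measurable.stronglyMeasurable
    have : MeasurableSet {q : (ℝ × Ω) × ℝ | 0 < q.2 ∧ q.2 ≤ q.1.1} := by
      exact (measurableSet_lt (measurable_const) (measurable_snd)).inter
        (measurableSet_le (measurable_snd) (measurable_fst.comp measurable_fst))
    exact hm.indicator this
  · simp_rw [← integral_indicator (measurableSet_Ioc)]
    apply StronglyMeasurable.measurable
    apply StronglyMeasurable.integral_prod_right (f := fun (p : ℝ × Ω) u => (Ioc p.1 0).indicator (fun u => h (u, p.2)) u)
    apply Measurable.stronglyMeasurable
    have : MeasurableSet {q : (ℝ × Ω) × ℝ | q.1.1 < q.2 ∧ q.2 ≤ 0} := by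
      exact (measurableSet_lt (measurable_fst.comp measurable_fst) (measurable_snd)).inter
        (measurableSet_le (measurable_snd) (measurable_const))
    exact hm.indicator this

lemma meas_ZZ {Ω E : Type*} [MeasurableSpace Ω] [MeasurableSpace E] (X : ℝ → Ω → E)
    (hX : Measurable (fun p : ℝ × Ω => X p.1 p.2)) (r f w : E → ℝ) (hr : Measurable r)
    (hf : Measurable f) (hw : Measurable w) :
    Measurable (fun p : ℝ × Ω => ZZ X r f w p.1 p.2) := by
  have h1 : Measurable (fun p : ℝ × Ω => ∫ u in (0:ℝ)..p.1, r (X u p.2)) :=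
    meas_int (fun p => r (X p.1 p.2)) (hr.comp hX)
  have h2 : Measurable (fun p : ℝ × Ω => Real.exp (-(∫ u in (0:ℝ)..p.1, r (X u p.2)))) :=
    Real.measurable_exp.comp h1.neg
  exact (meas_int _ (h2.mul (hf.comp hX))).add (h2.mul (hw.comp hX))

lemma ZZ_congr {Ω E : Type*} (X Y : ℝ → Ω → E) (r f w : E → ℝ) (s : ℝ) (hs : 0 ≤ s) (ω : Ω)
    (h : ∀ u, u ≤ s → X u ω = Y u ω) : ZZ X r f w s ω = ZZ Y r f w s ω := by
  have h1 : ∀ v, 0 ≤ v → v ≤ s → ∫ u in (0:ℝ)..v, r (X u ω) = ∫ u in (0:ℝ)..v, r (Y u ω) := by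
    intro v hv hvs
    apply intervalIntegral.integral_congr
    intro u hu
    rw [uIcc_of_le hv] at hu
    simp only [h u (hu.2.trans hvs)]
  unfold ZZ
  rw [h1 s hs le_rfl, h s le_rfl]
  congr 1
  apply intervalIntegral.integral_congr
  intro u hu
  rw [uIcc_of_le hs] at hu
  simp only [h1 u hu.1 hu.2, h u hu.2]

lemma prog_meas {Ω E : Type*} {m0 : MeasurableSpace Ω} (𝓕 : Filtration ℝ m0) [MetricSpace E]
    [MeasurableSpace E] [BorelSpace E] (X : ℝ → Ω → E) (hX : ProgMeasurable 𝓕 X) (t : ℝ) :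
    Measurable[@Prod.instMeasurableSpace ℝ Ω _ (𝓕 t)] (fun p : ℝ × Ω => X (min p.1 t) p.2) := by
  letI : MeasurableSpace Ω := 𝓕 t
  have h := (hX t).measurable
  have h2 : Measurable (fun p : ℝ × Ω => ((⟨min p.1 t, Set.mem_Iic.2 (min_le_right _ _)⟩ : Set.Iic t), p.2)) := by
    apply Measurable.prodMk
    · apply Measurable.subtype_mk
      fun_prop
    · fun_prop
  exact h.comp h2

lemma meas_halted {Ω E : Type*} {m0 : MeasurableSpace Ω} (𝓕 : Filtration ℝ m0) [MetricSpace E]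
    [MeasurableSpace E] [BorelSpace E] (X : ℝ → Ω → E) (hX : ProgMeasurable 𝓕 X)
    (r f w : E → ℝ) (hr : Measurable r) (hf : Measurable f) (hw : Measurable w)
    (t : ℝ) (ρ : Ω → ℝ) (hρ : Measurable[𝓕 t] ρ) (h0 : ∀ ω, 0 ≤ ρ ω) (hρt : ∀ ω, ρ ω ≤ t) :
    Measurable[𝓕 t] (fun ω => ZZ X r f w (ρ ω) ω) := by
  have h1 := @meas_ZZ Ω E (𝓕 t) _ (fun u ω => X (min u t) ω) (prog_meas 𝓕 X hX t) r f w hr hf hw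
  have h2 : (fun ω => ZZ X r f w (ρ ω) ω) =
      fun ω => ZZ (fun u ω => X (min u t) ω) r f w (ρ ω) ω := by
    funext ω
    apply ZZ_congr _ _ _ _ _ _ (h0 ω)
    intro u hu
    rw [min_eq_left (hu.trans (hρt ω))]
  rw [h2]
  letI : MeasurableSpace Ω := 𝓕 t
  exact h1.comp (hρ.prodMk measurable_id)

lemma meas_min_time {Ω : Type*} {m0 : MeasurableSpace Ω} (𝓕 : Filtration ℝ m0) (σ : Ω → ℝ)
    (hσ : IsStoppingTime 𝓕 (fun ω => (σ ω : WithTop ℝ))) (t : ℝ) :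
    Measurable[𝓕 t] (fun ω => min (σ ω) t) := by
  let _ : MeasurableSpace Ω := 𝓕 t
  apply measurable_of_Iic
  intro a
  by_cases h : t ≤ a
  · have : (fun ω => min (σ ω) t) ⁻¹' Iic a = univ := by
      ext ω; simp [h]
    rw [this]; exact MeasurableSet.univ
  · have : (fun ω => min (σ ω) t) ⁻¹' Iic a = {ω | σ ω ≤ a} := by
      ext ω; simp [h]
    rw [this]
    have := hσ a
    simp only [WithTop.coe_le_coe] at this
    exact 𝓕.mono (not_le.1 h).le _ this

lemma ZZ_bound {Ω E : Type*} (X : ℝ → Ω → E) (r f : E → ℝ) (hr0 : ∀ x, 0 ≤ r x) (Cf : ℝ)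
    (hfb : ∀ x, |f x| ≤ Cf) (s : ℝ) (hs : 0 ≤ s) (ω : Ω) :
    |∫ s in (0:ℝ)..s, Real.exp (-(∫ u in (0:ℝ)..s, r (X u ω))) * f (X s ω)| ≤ Cf * s ∧
    Real.exp (-(∫ u in (0:ℝ)..s, r (X u ω))) ≤ 1 := by
  have h1 : ∀ v, 0 ≤ v → Real.exp (-(∫ u in (0:ℝ)..v, r (X u ω))) ≤ 1 := by
    intro v hv
    rw [Real.exp_le_one_iff, neg_nonpos]
    exact intervalIntegral.integral_nonneg hv (fun u _ => hr0 _)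
  refine ⟨?_, h1 s hs⟩
  have := intervalIntegral.norm_integral_le_of_norm_le_const (a := 0) (b := s) (C := Cf)
    (f := fun s => Real.exp (-(∫ u in (0:ℝ)..s, r (X u ω))) * f (X s ω)) (by
      intro u hu
      rw [uIoc_of_le hs] at hu
      rw [norm_mul, Real.norm_eq_abs, Real.norm_eq_abs, abs_of_pos (Real.exp_pos _)]
      calc _ ≤ 1 * |f (X u ω)| := by gcongr; exact h1 u hu.1.le
        _ ≤ Cf := by rw [one_mul]; exact hfb _)
  simpa [abs_of_nonneg hs] using this

lemma fatou {Ω : Type*} {m0 : MeasurableSpace Ω} (P : Measure Ω) [IsProbabilityMeasure P]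
    (h : Ω → ℝ) (hn : ℕ → Ω → ℝ) (hm : Measurable h) (c C : ℝ) (hC : ∀ ω, -C ≤ h ω)
    (hnC : ∀ n ω, -C ≤ hn n ω) (hni : ∀ n, Integrable (hn n) P) (hnc : ∀ n, ∫ ω, hn n ω ∂P ≤ c)
    (hlim : ∀ ω, ∀ᶠ n in atTop, hn n ω = h ω) : Integrable h P ∧ ∫ ω, h ω ∂P ≤ c := by
  have key : ∫⁻ ω, ENNReal.ofReal (h ω + C) ∂P ≤ ENNReal.ofReal (c + C) := by
    calc ∫⁻ ω, ENNReal.ofReal (h ω + C) ∂P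
        = ∫⁻ ω, liminf (fun n => ENNReal.ofReal (hn n ω + C)) atTop ∂P := by
          apply lintegral_congr
          intro ω
          symm
          apply Tendsto.liminf_eq
          apply tendsto_const_nhds.congr'
          filter_upwards [hlim ω] with n hn using by rw [hn]
      _ ≤ liminf (fun n => ∫⁻ ω, ENNReal.ofReal (hn n ω + C) ∂P) atTop := by
          apply lintegral_liminf_le'
          intro n
          exact ((hni n).aestronglyMeasurable.aemeasurable.add_const C).ennreal_ofReal
      _ ≤ ENNReal.ofReal (c + C) := by
          apply liminf_le_of_frequently_le'
          apply Frequently.of_forall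
          intro n
          rw [← ofReal_integral_eq_lintegral_ofReal (f := fun ω => hn n ω + C) ((hni n).add (integrable_const C))
            (Eventually.of_forall fun ω => by have := hnC n ω; simp; linarith)]
          apply ENNReal.ofReal_le_ofReal
          rw [integral_add (hni n) (integrable_const C)]
          have := hnc n
          simp; linarith
  have hi : Integrable (fun ω => h ω + C) P := by
    refine ⟨(hm.add_const C).aestronglyMeasurable, ?_⟩
    rw [hasFiniteIntegral_iff_ofReal (Eventually.of_forall fun ω => by
      have := hC ω; simp; linarith)]
    exact key.trans_lt ENNReal.ofReal_lt_top
  have hi' : Integrable h P := by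
    have h2 := hi.sub (integrable_const C)
    refine h2.congr (Eventually.of_forall fun ω => ?_)
    simp
  refine ⟨hi', ?_⟩
  rw [← ofReal_integral_eq_lintegral_ofReal hi
    (Eventually.of_forall fun ω => by have := hC ω; simp; linarith)] at key
  have hcC : 0 ≤ c + C := by
    have h0 : -C ≤ ∫ ω, hn 0 ω ∂P := by
      have := integral_mono (μ := P) (integrable_const (-C)) (hni 0) (fun ω => hnC 0 ω)
      simpa using this
    linarith [hnc 0]
  rw [ENNReal.ofReal_le_ofReal_iff hcC, integral_add hi' (integrable_const C)] at key
  simp at key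
  exact key

end S14

/-- discounted version of Statement 3: if `σ` is a bounded stopping time
whose discounted payoff is `≥ w₀ − η` and `g(X_t) < w(X_t) − ε` strictly before `τ_ε`,
then `E[1_{σ<τ_ε} e^{−α_σ}] ≤ η/ε`. -/
theorem stmt14
    {Ω : Type*} {m0 : MeasurableSpace Ω} (P : Measure Ω) [IsProbabilityMeasure P]
    (𝓕 : Filtration ℝ m0)
    {E : Type*} [MetricSpace E] [MeasurableSpace E] [BorelSpace E]
    (X : ℝ → Ω → E) (hX : ProgMeasurable 𝓕 X)
    (f g : E → ℝ) (hf : Measurable f) (hg : Measurable g)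
    (Cf Cg : ℝ) (hfb : ∀ x, |f x| ≤ Cf) (hgb : ∀ x, |g x| ≤ Cg)
    (r : E → ℝ) (hr : Measurable r) (Cr : ℝ) (hrb : ∀ x, |r x| ≤ Cr)
    (hr0 : ∀ x, 0 ≤ r x)
    (w : E → ℝ) (hw : Measurable w) (hgw : ∀ x, g x ≤ w x)
    (hZint : ∀ t : ℝ, 0 ≤ t →
      Integrable (fun ω =>
        (∫ s in (0:ℝ)..t, Real.exp (-(∫ u in (0:ℝ)..s, r (X u ω))) * f (X s ω))
          + Real.exp (-(∫ u in (0:ℝ)..t, r (X u ω))) * w (X t ω)) P)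
    (hZadp : ∀ t : ℝ, 0 ≤ t →
      StronglyMeasurable[𝓕 t] fun ω =>
        (∫ s in (0:ℝ)..t, Real.exp (-(∫ u in (0:ℝ)..s, r (X u ω))) * f (X s ω))
          + Real.exp (-(∫ u in (0:ℝ)..t, r (X u ω))) * w (X t ω))
    (hZsup : ∀ (σ₁ σ₂ : Ω → ℝ) (h1 : IsStoppingTime 𝓕 (fun ω => (σ₁ ω : WithTop ℝ)))
      (_h2 : IsStoppingTime 𝓕 (fun ω => (σ₂ ω : WithTop ℝ))),
      (∀ ω, 0 ≤ σ₁ ω) → (∀ ω, σ₁ ω ≤ σ₂ ω) → (∃ T, ∀ ω, σ₂ ω ≤ T) →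
      ∀ᵐ ω ∂P,
        (P[(fun ω' =>
            (∫ s in (0:ℝ)..(σ₂ ω'), Real.exp (-(∫ u in (0:ℝ)..s, r (X u ω'))) * f (X s ω'))
              + Real.exp (-(∫ u in (0:ℝ)..(σ₂ ω'), r (X u ω'))) * w (X (σ₂ ω') ω')) |
            h1.measurableSpace]) ω
          ≤ (∫ s in (0:ℝ)..(σ₁ ω), Real.exp (-(∫ u in (0:ℝ)..s, r (X u ω))) * f (X s ω))
              + Real.exp (-(∫ u in (0:ℝ)..(σ₁ ω), r (X u ω))) * w (X (σ₁ ω) ω))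
    (w₀ : ℝ)
    (hZ0 : ∀ᵐ ω ∂P,
      (∫ s in (0:ℝ)..(0:ℝ), Real.exp (-(∫ u in (0:ℝ)..s, r (X u ω))) * f (X s ω))
        + Real.exp (-(∫ u in (0:ℝ)..(0:ℝ), r (X u ω))) * w (X 0 ω) = w₀)
    (ε η : ℝ) (hε : 0 < ε) (hη : 0 < η)
    (σ : Ω → ℝ) (hσ : IsStoppingTime 𝓕 (fun ω => (σ ω : WithTop ℝ))) (hσ0 : ∀ ω, 0 ≤ σ ω)
    (hσb : ∃ T, ∀ ω, σ ω ≤ T)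
    (hσval : w₀ - η ≤ ∫ ω,
      ((∫ s in (0:ℝ)..(σ ω), Real.exp (-(∫ u in (0:ℝ)..s, r (X u ω))) * f (X s ω))
        + Real.exp (-(∫ u in (0:ℝ)..(σ ω), r (X u ω))) * g (X (σ ω) ω)) ∂P)
    (τε : Ω → ℝ≥0∞)
    (hτεst : ∀ t : ℝ, MeasurableSet[𝓕 t] {ω | τε ω ≤ ENNReal.ofReal t})
    (hτε : ∀ᵐ ω ∂P, ∀ t : ℝ, 0 ≤ t → ENNReal.ofReal t < τε ω →
      g (X t ω) < w (X t ω) - ε) :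
    ∫ ω, (if ENNReal.ofReal (σ ω) < τε ω then
        Real.exp (-(∫ u in (0:ℝ)..(σ ω), r (X u ω))) else 0) ∂P ≤ η / ε := by
  obtain ⟨T₀, hT₀⟩ := hσb
  obtain ⟨ω₀⟩ : Nonempty Ω := P.nonempty_of_neZero
  have hT0 : 0 ≤ T₀ := (hσ0 ω₀).trans (hT₀ ω₀)
  have hCf : 0 ≤ Cf := (abs_nonneg _).trans (hfb (X 0 ω₀))
  have hCg : 0 ≤ Cg := (abs_nonneg _).trans (hgb (X 0 ω₀))
  set C := Cf * T₀ + Cg with hCdef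
  have hσset : ∀ t, MeasurableSet[𝓕 t] {ω | σ ω ≤ t} := by
    intro t
    have := hσ t
    simp only [WithTop.coe_le_coe] at this
    exact this
  have hσmin : (fun ω => min (σ ω) T₀) = σ := by
    funext ω; exact min_eq_left (hT₀ ω)
  have hσm : Measurable[𝓕 T₀] σ := by
    rw [← hσmin]; exact S14.meas_min_time 𝓕 σ hσ T₀
  have hZm : Measurable (fun ω => S14.ZZ X r f w (σ ω) ω) :=
    (S14.meas_halted 𝓕 X hX r f w hr hf hw T₀ σ hσm hσ0 hT₀).mono (𝓕.le T₀) le_rfl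
  have hGm : Measurable (fun ω => S14.ZZ X r f g (σ ω) ω) :=
    (S14.meas_halted 𝓕 X hX r f g hr hf hg T₀ σ hσm hσ0 hT₀).mono (𝓕.le T₀) le_rfl
  have hlow : ∀ s, 0 ≤ s → s ≤ T₀ → ∀ ω, |S14.ZZ X r f g s ω| ≤ C := by
    intro s hs hsT ω
    obtain ⟨h1, h2⟩ := S14.ZZ_bound X r f hr0 Cf hfb s hs ω
    unfold S14.ZZ
    refine (abs_add_le _ _).trans (add_le_add (h1.trans (by gcongr)) ?_)
    rw [abs_mul, abs_of_pos (Real.exp_pos _)]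
    calc _ ≤ 1 * |g (X s ω)| := by gcongr
      _ ≤ Cg := by rw [one_mul]; exact hgb _
  have hGZ : ∀ s ω, S14.ZZ X r f g s ω ≤ S14.ZZ X r f w s ω := by
    intro s ω
    unfold S14.ZZ
    have := hgw (X s ω)
    gcongr
  have hlowZ : ∀ s, 0 ≤ s → s ≤ T₀ → ∀ ω, -C ≤ S14.ZZ X r f w s ω := fun s hs hsT ω =>
    (abs_le.1 (hlow s hs hsT ω)).1.trans (hGZ s ω)
  have hZT : Integrable (fun ω => S14.ZZ X r f w T₀ ω) P := hZint T₀ hT0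
  -- truncated stopping times
  let ρ : ℕ → Ω → ℝ := fun n ω => if S14.ZZ X r f w (σ ω) ω ≤ n then σ ω else T₀
  have hρ0 : ∀ n ω, 0 ≤ ρ n ω := by
    intro n ω; simp only [ρ]; split_ifs
    · exact hσ0 ω
    · exact hT0
  have hρT : ∀ n ω, ρ n ω ≤ T₀ := by
    intro n ω; simp only [ρ]; split_ifs
    · exact hT₀ ω
    · exact le_rfl
  have hρst : ∀ n, IsStoppingTime 𝓕 (fun ω => (ρ n ω : WithTop ℝ)) := by
    intro n t
    simp only [WithTop.coe_le_coe]
    by_cases ht : T₀ ≤ t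
    · have : {ω | ρ n ω ≤ t} = univ := by
        ext ω; simp [(hρT n ω).trans ht]
      rw [this]; exact MeasurableSet.univ
    by_cases ht0 : 0 ≤ t
    · have : {ω | ρ n ω ≤ t} = {ω | σ ω ≤ t} ∩
          {ω | S14.ZZ X r f w (min (σ ω) t) ω ≤ n} := by
        ext ω
        simp only [ρ, mem_setOf_eq, mem_inter_iff]
        constructor
        · intro h
          split_ifs at h with h'
          · refine ⟨h, ?_⟩
            rwa [min_eq_left h]
          · exact absurd h ht
        · rintro ⟨h1, h2⟩
          rw [min_eq_left h1] at h2
          rwa [if_pos h2]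
      rw [this]
      refine MeasurableSet.inter (hσset t) ?_
      have hm := S14.meas_halted 𝓕 X hX r f w hr hf hw t _ (S14.meas_min_time 𝓕 σ hσ t)
        (fun ω => le_min (hσ0 ω) ht0) (fun ω => min_le_right _ _)
      exact hm measurableSet_Iic
    · have : {ω | ρ n ω ≤ t} = ∅ := by
        ext ω
        simp only [mem_setOf_eq, mem_empty_iff_false, iff_false]
        intro h
        exact ht0 ((hρ0 n ω).trans h)
      rw [this]; exact @MeasurableSet.empty _ (𝓕 t)
  have hρi : ∀ n, Integrable (fun ω => S14.ZZ X r f w (ρ n ω) ω) P := by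
    intro n
    have hset : MeasurableSet {ω | S14.ZZ X r f w (σ ω) ω ≤ n} := hZm measurableSet_Iic
    have heq : (fun ω => S14.ZZ X r f w (ρ n ω) ω) = fun ω =>
        if S14.ZZ X r f w (σ ω) ω ≤ n then S14.ZZ X r f w (σ ω) ω else S14.ZZ X r f w T₀ ω := by
      funext ω
      simp only [ρ]
      split_ifs <;> rfl
    rw [heq]
    refine Integrable.mono' (g := fun ω => (C + n) + |S14.ZZ X r f w T₀ ω|)
      ((integrable_const _).add hZT.abs) ?_ ?_
    · have h1 : AEMeasurable (fun ω => if S14.ZZ X r f w (σ ω) ω ≤ n then S14.ZZ X r f w (σ ω) ω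
          else S14.ZZ X r f w T₀ ω) P := by
        refine Measurable.aemeasurable (Measurable.ite hset hZm ?_)
        exact ((hZadp T₀ hT0).measurable).mono (𝓕.le T₀) le_rfl
      exact h1.aestronglyMeasurable
    · refine Eventually.of_forall fun ω => ?_
      have hC0 : 0 ≤ C := by positivity
      have hn0 : (0:ℝ) ≤ n := Nat.cast_nonneg n
      split_ifs with h
      · have := hlowZ (σ ω) (hσ0 ω) (hT₀ ω) ω
        have h3 := abs_nonneg (S14.ZZ X r f w T₀ ω)
        rw [Real.norm_eq_abs, abs_le]
        constructor <;> linarith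
      · rw [Real.norm_eq_abs]; linarith
  have h0st : IsStoppingTime 𝓕 (fun _ : Ω => ((0:ℝ) : WithTop ℝ)) := isStoppingTime_const 𝓕 0
  have hρc : ∀ n, ∫ ω, S14.ZZ X r f w (ρ n ω) ω ∂P ≤ w₀ := by
    intro n
    have h := hZsup (fun _ => 0) (ρ n) h0st (hρst n) (fun _ => le_rfl) (hρ0 n) ⟨T₀, hρT n⟩
    have hle : h0st.measurableSpace ≤ m0 := h0st.measurableSpace_le
    have h2 : ∀ᵐ ω ∂P, (P[(fun ω => S14.ZZ X r f w (ρ n ω) ω) | h0st.measurableSpace]) ω ≤ w₀ := by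
      filter_upwards [h, hZ0] with ω h1 h2
      exact h1.trans h2.le
    rw [← integral_condExp hle]
    have := integral_mono_ae (μ := P) integrable_condExp (integrable_const w₀) h2
    simpa using this
  obtain ⟨hZi, hZle⟩ := S14.fatou P (fun ω => S14.ZZ X r f w (σ ω) ω)
    (fun n ω => S14.ZZ X r f w (ρ n ω) ω) hZm w₀ C (fun ω => hlowZ _ (hσ0 ω) (hT₀ ω) ω)
    (fun n ω => hlowZ _ (hρ0 n ω) (hρT n ω) ω) hρi hρc (by
      intro ω
      obtain ⟨N, hN⟩ := exists_nat_ge (S14.ZZ X r f w (σ ω) ω)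
      filter_upwards [eventually_ge_atTop N] with n hn
      have : S14.ZZ X r f w (σ ω) ω ≤ n := hN.trans (by exact_mod_cast hn)
      simp only [ρ, if_pos this])
  have hGi : Integrable (fun ω => S14.ZZ X r f g (σ ω) ω) P :=
    Integrable.mono' (integrable_const C) hGm.aestronglyMeasurable
      (Eventually.of_forall fun ω => hlow _ (hσ0 ω) (hT₀ ω) ω)
  have hGval : w₀ - η ≤ ∫ ω, S14.ZZ X r f g (σ ω) ω ∂P := hσval
  have hfin := integral_mono_of_nonneg (μ := P)
    (f := fun ω => if ENNReal.ofReal (σ ω) < τε ω then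
        Real.exp (-(∫ u in (0:ℝ)..(σ ω), r (X u ω))) else 0)
    (g := fun ω => (S14.ZZ X r f w (σ ω) ω - S14.ZZ X r f g (σ ω) ω) / ε)
    (Eventually.of_forall fun ω => by
      simp only [Pi.zero_apply]
      split_ifs
      · exact (Real.exp_pos _).le
      · exact le_rfl)
    ((hZi.sub hGi).div_const ε) (by
      filter_upwards [hτε] with ω hω
      rw [le_div_iff₀ hε]
      split_ifs with h
      · have h1 := hω (σ ω) (hσ0 ω) h
        have h2 := mul_le_mul_of_nonneg_left (show ε ≤ w (X (σ ω) ω) - g (X (σ ω) ω) by linarith)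
          (Real.exp_pos (-(∫ u in (0:ℝ)..(σ ω), r (X u ω)))).le
        unfold S14.ZZ
        linarith
      · have := hGZ (σ ω) ω
        linarith)
  refine hfin.trans ?_
  rw [integral_div, integral_sub hZi hGi]
  gcongr
  linarith
end
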